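/- arXiv:2209.06448 — 15 statements merged into one kernel-verified Lean document; each statement's English description precedes it below -/
import Mathlib

section
/- For every BRV A and all variables x and y, the following identities hold: σ^r_{x=y}(A) = A ∩ cyl^l_{{x}}(σ^lr_{x=y}(σ^lr_{x=x}(cyl^l_{{x}}(A)))) and σ^l_{x=y}(A) = A ∩ cyl^r_{{x}}(σ^lr_{y=x}(σ^lr_{x=x}(cyl^r_{{x}}(A)))). (Lemma: the left and right selections are expressible from cylindrifications, left-to-right selection, and intersection.) -/
/-- A binary relation on valuations (BRV). -/
abbrev BRV (V dom : Type*) := Set ((V → dom) × (V → dom))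

namespace BRV

variable {V dom : Type*}

/-- `ν1` and `ν2` agree on the set `Y` of variables. -/
def AgreeOn (ν1 ν2 : V → dom) (Y : Set V) : Prop := ∀ y ∈ Y, ν1 y = ν2 y

/-- Composition of BRVs. -/
def comp (A B : BRV V dom) : BRV V dom :=
  {p | ∃ ν3, (p.1, ν3) ∈ A ∧ (ν3, p.2) ∈ B}

/-- Left cylindrification. -/
def cyll (Z : Set V) (A : BRV V dom) : BRV V dom :=
  {p | ∃ ν1', (ν1', p.2) ∈ A ∧ AgreeOn ν1' p.1 Zᶜ}

/-- Right cylindrification. -/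
def cylr (Z : Set V) (A : BRV V dom) : BRV V dom :=
  {p | ∃ ν2', (p.1, ν2') ∈ A ∧ AgreeOn ν2' p.2 Zᶜ}

/-- Left selection. -/
def sell (x y : V) (A : BRV V dom) : BRV V dom := {p ∈ A | p.1 x = p.1 y}

/-- Right selection. -/
def selr (x y : V) (A : BRV V dom) : BRV V dom := {p ∈ A | p.2 x = p.2 y}

/-- Left-to-right selection. -/
def sellr (x y : V) (A : BRV V dom) : BRV V dom := {p ∈ A | p.1 x = p.2 y}

end BRV

theorem stmt0 (V dom : Type*) [Countable dom] [Infinite dom]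
    (A : BRV V dom) (x y : V) :
    BRV.selr x y A
      = A ∩ BRV.cyll {x} (BRV.sellr x y (BRV.sellr x x (BRV.cyll {x} A))) ∧
    BRV.sell x y A
      = A ∩ BRV.cylr {x} (BRV.sellr y x (BRV.sellr x x (BRV.cylr {x} A))) := by
  classical
  constructor
  · ext ⟨ν1, ν2⟩
    constructor
    · rintro ⟨hA, h⟩
      refine ⟨hA, Function.update ν1 x (ν2 x), ⟨⟨⟨ν1, hA, ?_⟩, ?_⟩, ?_⟩, ?_⟩
      · intro z hz
        exact (Function.update_of_ne hz _ _).symm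
      · simp
      · simpa using h
      · intro z hz
        exact Function.update_of_ne hz _ _
    · rintro ⟨hA, ν, ⟨⟨_, h1⟩, h2⟩, _⟩
      exact ⟨hA, h1.symm.trans h2⟩
  · ext ⟨ν1, ν2⟩
    constructor
    · rintro ⟨hA, h⟩
      refine ⟨hA, Function.update ν2 x (ν1 x), ⟨⟨⟨ν2, hA, ?_⟩, ?_⟩, ?_⟩, ?_⟩
      · intro z hz
        exact (Function.update_of_ne hz _ _).symm
      · simp
      · simpa using h.symm
      · intro z hz
        exact Function.update_of_ne hz _ _
    · rintro ⟨hA, ν, ⟨⟨_, h1⟩, h2⟩, _⟩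
      exact ⟨hA, h1.trans h2.symm⟩
end

section
/- Let Q be a global BRV. If there exists a finite set of variables that determines Q on O^sem(Q), then I^sem(Q) determines Q on O^sem(Q). -/
/-- A global BRV: a function from interpretations to BRVs.
`I` is the type of interpretations. -/
abbrev GBRV (V dom I : Type*) := I → BRV V dom

/-- Semantic outputs of a global BRV. -/
def Osem {V dom I : Type*} (Q : GBRV V dom I) : Set V :=
  {x | ∃ (D : I) (p : (V → dom) × (V → dom)), p ∈ Q D ∧ p.1 x ≠ p.2 x}

/-- `X` determines `Q` on `Y`. -/
def Determines {V dom I : Type*} (Q : GBRV V dom I) (X Y : Set V) : Prop :=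
  ∀ (D : I), ∀ p ∈ Q D, ∀ ν1' : V → dom, BRV.AgreeOn ν1' p.1 X →
    ∃ ν2' : V → dom, BRV.AgreeOn ν2' p.2 Y ∧ (ν1', ν2') ∈ Q D

/-- Semantic inputs of a global BRV. -/
def Isem {V dom I : Type*} (Q : GBRV V dom I) : Set V :=
  {x | ¬ Determines Q ({x}ᶜ) (Osem Q)}

-- `ν` patched with the `X`-valuation `ν'` (the values of `ν'` outside `X` are irrelevant).
open Classical in
noncomputable def patch {V dom : Type*} (ν ν' : V → dom) (X : Set V) : V → dom :=
  fun v => if v ∈ X then ν' v else ν v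

/-- A global BRV is inertially cylindrified on `X`. -/
def InertCyl {V dom I : Type*} (Q : GBRV V dom I) (X : Set V) : Prop :=
  (∀ x ∈ X, x ∉ Osem Q) ∧
  ∀ (D : I), ∀ p ∈ Q D, ∀ ν' : V → dom,
    (patch p.1 ν' X, patch p.2 ν' X) ∈ Q D

theorem det_mono {V dom I : Type*} {Q : GBRV V dom I} {X X' Y : Set V} (hX : X ⊆ X')
    (h : Determines Q X Y) : Determines Q X' Y :=
  fun D p hp ν1' ha => h D p hp ν1' (fun y hy => ha y (hX hy))

theorem det_remove {V dom I : Type*} {Q : GBRV V dom I} {X Y : Set V} {a : V}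
    (ha : Determines Q ({a}ᶜ) Y) (h : Determines Q (insert a X) Y) : Determines Q X Y := by
  classical
  intro D p hp ν1' hag
  obtain ⟨ν2, h2, hq⟩ := h D p hp (Function.update ν1' a (p.1 a)) (by
    intro y hy
    by_cases hya : y = a
    · subst hya; simp
    · rw [Function.update_of_ne hya]
      exact hag y (hy.resolve_left hya))
  obtain ⟨ν3, h3, hq3⟩ := ha D _ hq ν1' (by
    intro y hy
    have hya : y ≠ a := hy
    exact (Function.update_of_ne hya _ _).symm)
  exact ⟨ν3, fun y hy => (h3 y hy).trans (h2 y hy), hq3⟩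

theorem stmt2 (V dom I : Type*) [Countable dom] [Infinite dom]
    (Q : GBRV V dom I)
    (h : ∃ X : Set V, X.Finite ∧ Determines Q X (Osem Q)) :
    Determines Q (Isem Q) (Osem Q) := by
  obtain ⟨X, hfin, hX⟩ := h
  have key : ∀ S : Set V, S.Finite → Determines Q (S ∪ Isem Q) (Osem Q) →
      Determines Q (Isem Q) (Osem Q) := by
    intro S hS
    induction S, hS using Set.Finite.induction_on with
    | empty => intro h; simpa using h
    | @insert a S _ _ ih =>
      intro h
      rw [Set.insert_union] at h
      apply ih
      by_cases ha : a ∈ Isem Q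
      · rwa [Set.insert_eq_of_mem (Set.mem_union_right S ha)] at h
      · exact det_remove (not_not.mp ha) h
  exact key X hfin (det_mono Set.subset_union_left hX)
end

section
/- Let Q be a global BRV such that I^sem(Q) determines Q on O^sem(Q). Then for every interpretation D, every (ν1,ν2) ∈ Q(D), and every valuation ν1' that agrees with ν1 both on I^sem(Q) and outside O^sem(Q), we have (ν1',ν2) ∈ Q(D). -/
theorem stmt3 (V dom I : Type*) [Countable dom] [Infinite dom]
    (Q : GBRV V dom I)
    (h : Determines Q (Isem Q) (Osem Q)) :
    ∀ (D : I), ∀ p ∈ Q D, ∀ ν1' : V → dom,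
      BRV.AgreeOn ν1' p.1 (Isem Q) → BRV.AgreeOn ν1' p.1 (Osem Q)ᶜ →
      (ν1', p.2) ∈ Q D := by
  intro D p hp ν1' hI hO
  obtain ⟨ν2, hν, hq⟩ := h D p hp ν1' hI
  have e : ν2 = p.2 := by
    funext x
    by_cases hx : x ∈ Osem Q
    · exact hν x hx
    · have h1 : ν1' x = ν2 x := by
        by_contra hne
        exact hx ⟨D, (ν1', ν2), hq, hne⟩
      have h2 : p.1 x = p.2 x := by
        by_contra hne
        exact hx ⟨D, p, hp, hne⟩
      rw [← h1, ← h2]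
      exact hO x hx
  rw [← e]
  exact hq
end

section
/- Let Q be a global BRV such that I^sem(Q) determines Q on O^sem(Q). Then Q is inertially cylindrified on V ∖ (I^sem(Q) ∪ O^sem(Q)). -/
theorem stmt4 (V dom I : Type*) [Countable dom] [Infinite dom]
    (Q : GBRV V dom I)
    (h : Determines Q (Isem Q) (Osem Q)) :
    InertCyl Q ((Isem Q ∪ Osem Q)ᶜ) := by
  refine ⟨fun x hx ho => hx (Or.inr ho), ?_⟩
  intro D p hp ν'
  obtain ⟨ν2, h2, hq⟩ := h D p hp (patch p.1 ν' ((Isem Q ∪ Osem Q)ᶜ)) (by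
    intro y hy
    simp [patch, hy])
  have key : ν2 = patch p.2 ν' ((Isem Q ∪ Osem Q)ᶜ) := by
    funext v
    by_cases hv : v ∈ Osem Q
    · rw [h2 v hv]
      simp [patch, hv]
    · have e1 : patch p.1 ν' ((Isem Q ∪ Osem Q)ᶜ) v = ν2 v := by
        by_contra hne
        exact hv ⟨D, _, hq, hne⟩
      have e2 : p.1 v = p.2 v := by
        by_contra hne
        exact hv ⟨D, _, hp, hne⟩
      rw [← e1]
      simp only [patch, e2]
  rw [← key]
  exact hq
end

section
/- Let M be a module name, x̄ a tuple of variables of length iar(M), and ȳ a tuple of variables of length ar(M) − iar(M), and let Q be the global BRV mapping each interpretation D to {(ν1,ν2) : the concatenated tuple ν1(x̄)·ν2(ȳ) belongs to D(M) and ν1 and ν2 agree outside the set of variables in ȳ}. Then I^sem(Q) equals the set of variables occurring in x̄ and O^sem(Q) equals the set of variables occurring in ȳ. -/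
theorem stmt5 (Name V dom : Type*) [Nonempty Name] [Countable dom] [Infinite dom]
    (ar iar : Name → ℕ) (hle : ∀ M, iar M ≤ ar M)
    (M : Name) (xs ys : List V)
    (hx : xs.length = iar M) (hy : ys.length = ar M - iar M)
    (Q : GBRV V dom (Name → Set (List dom)))
    (hQ : ∀ D, Q D = {p | (xs.map p.1 ++ ys.map p.2) ∈ D M ∧
                          BRV.AgreeOn p.1 p.2 {v | v ∈ ys}ᶜ}) :
    Isem Q = {v | v ∈ xs} ∧ Osem Q = {v | v ∈ ys} := by
  classical
  obtain ⟨a, b, hab⟩ := exists_pair_ne dom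
  have hO : Osem Q = {v | v ∈ ys} := by
    ext y
    constructor
    · rintro ⟨D, p, hp, hne⟩
      rw [hQ] at hp
      by_contra hy'
      exact hne (hp.2 y hy')
    · intro hy'
      refine ⟨fun _ => Set.univ, (fun _ => a, Function.update (fun _ => a) y b), ?_, ?_⟩
      · rw [hQ]
        refine ⟨trivial, fun v hv => ?_⟩
        have hvy : v ≠ y := fun h => hv (h ▸ hy')
        simp [hvy]
      · simpa using hab
  refine ⟨?_, hO⟩
  ext x
  constructor
  · intro hxI
    by_contra hxs
    apply hxI
    rw [hO]
    intro D p hp ν hν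
    rw [hQ] at hp
    refine ⟨fun v => if v ∈ ys then p.2 v else ν v, ?_, ?_⟩
    · intro v hv
      exact if_pos hv
    · rw [hQ]
      refine ⟨?_, fun v hv => ?_⟩
      · have h1 : xs.map ν = xs.map p.1 := by
          apply List.map_congr_left
          intro v hv
          exact hν v (fun h => hxs (h ▸ hv))
        have h2 : ys.map (fun v => if v ∈ ys then p.2 v else ν v) = ys.map p.2 := by
          apply List.map_congr_left
          intro v hv
          exact if_pos hv
        change xs.map ν ++ ys.map (fun v => if v ∈ ys then p.2 v else ν v) ∈ D M
        rw [h1, h2]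
        exact hp.1
      · exact (if_neg hv).symm
  · intro hxs hdet
    obtain ⟨ν2, -, h⟩ := hdet
      (fun _ => {xs.map (fun _ => a) ++ ys.map (fun _ => a)})
      (fun _ => a, fun _ => a) (by rw [hQ]; exact ⟨rfl, fun _ _ => rfl⟩)
      (Function.update (fun _ => a) x b)
      (fun v hv => Function.update_of_ne hv _ _)
    rw [hQ] at h
    have h1 := (List.append_inj h.1 (by simp)).1
    have h2 := List.map_inj_left.1 h1 x hxs
    simp at h2
    exact hab h2.symm
end

section
/- (Soundness Theorem) The pair (I^syn, O^syn) is a sound input–output definition; that is: for every atomic module expression α = M(x̄;ȳ), I^syn(α) is the set of variables in x̄ and O^syn(α) is the set of variables in ȳ; for every LIF expression α, O^syn(α) ⊇ O^sem(α); and for every LIF expression α, I^syn(α) determines the global BRV of α on O^syn(α). -/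
/-- A module vocabulary: each module name has an arity and an input arity. -/
structure Vocab (Name : Type*) where
  ar : Name → ℕ
  iar : Name → ℕ
  iar_le : ∀ M, iar M ≤ ar M

/-- LIF expressions over a module vocabulary. -/
inductive LIF (Name V : Type*) (voc : Vocab Name) : Type _ where
  | idE : LIF Name V voc
  | atom (M : Name) (xs ys : List V)
      (hx : xs.length = voc.iar M) (hy : ys.length = voc.ar M - voc.iar M) :
      LIF Name V voc
  | union (a b : LIF Name V voc) : LIF Name V voc
  | inter (a b : LIF Name V voc) : LIF Name V voc
  | diff  (a b : LIF Name V voc) : LIF Name V voc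
  | comp  (a b : LIF Name V voc) : LIF Name V voc
  | cyll (Z : Finset V) (a : LIF Name V voc) : LIF Name V voc
  | cylr (Z : Finset V) (a : LIF Name V voc) : LIF Name V voc
  | sellr (x y : V) (a : LIF Name V voc) : LIF Name V voc
  | sell (x y : V) (a : LIF Name V voc) : LIF Name V voc
  | selr (x y : V) (a : LIF Name V voc) : LIF Name V voc

/-- An interpretation assigns to each module name a relation over `dom`,
represented as a set of lists. -/
abbrev Interp (Name dom : Type*) := Name → Set (List dom)

namespace LIF

variable {Name V dom : Type*} {voc : Vocab Name}

/-- The semantics of a LIF expression under an interpretation. -/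
def sem (D : Interp Name dom) : LIF Name V voc → BRV V dom
  | .idE => {p | p.1 = p.2}
  | .atom M xs ys _ _ =>
      {p | (xs.map p.1 ++ ys.map p.2) ∈ D M ∧ BRV.AgreeOn p.1 p.2 {v | v ∈ ys}ᶜ}
  | .union a b => a.sem D ∪ b.sem D
  | .inter a b => a.sem D ∩ b.sem D
  | .diff a b  => a.sem D \ b.sem D
  | .comp a b  => BRV.comp (a.sem D) (b.sem D)
  | .cyll Z a  => BRV.cyll (↑Z) (a.sem D)
  | .cylr Z a  => BRV.cylr (↑Z) (a.sem D)
  | .sellr x y a => BRV.sellr x y (a.sem D)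
  | .sell x y a  => BRV.sell x y (a.sem D)
  | .selr x y a  => BRV.selr x y (a.sem D)

/-- The global BRV induced by a LIF expression. -/
def gsem (dom : Type*) (α : LIF Name V voc) : GBRV V dom (Interp Name dom) :=
  fun D => α.sem D

end LIF

namespace LIF

variable {Name V : Type*} {voc : Vocab Name} [DecidableEq V]

/-- Syntactic outputs of a LIF expression. -/
def Osyn : LIF Name V voc → Finset V
  | .idE => ∅
  | .atom _ _ ys _ _ => ys.toFinset
  | .union a b => a.Osyn ∪ b.Osyn
  | .inter a b => a.Osyn ∩ b.Osyn
  | .diff a _  => a.Osyn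
  | .comp a b  => a.Osyn ∪ b.Osyn
  | .cyll Z a  => a.Osyn ∪ Z
  | .cylr Z a  => a.Osyn ∪ Z
  | .sellr x y a => if x = y then a.Osyn \ {x} else a.Osyn
  | .sell _ _ a  => a.Osyn
  | .selr _ _ a  => a.Osyn

/-- Syntactic inputs of a LIF expression. -/
def Isyn : LIF Name V voc → Finset V
  | .idE => ∅
  | .atom _ xs _ _ _ => xs.toFinset
  | .union a b => a.Isyn ∪ b.Isyn ∪ ((a.Osyn \ b.Osyn) ∪ (b.Osyn \ a.Osyn))
  | .inter a b => a.Isyn ∪ b.Isyn ∪ ((a.Osyn \ b.Osyn) ∪ (b.Osyn \ a.Osyn))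
  | .diff a b  => a.Isyn ∪ b.Isyn ∪ ((a.Osyn \ b.Osyn) ∪ (b.Osyn \ a.Osyn))
  | .comp a b  => a.Isyn ∪ (b.Isyn \ a.Osyn)
  | .cyll Z a  => a.Isyn \ Z
  | .cylr _ a  => a.Isyn
  | .sellr x y a =>
      if x = y then (if y ∈ a.Osyn then a.Isyn ∪ {x} else a.Isyn)
      else (if y ∈ a.Osyn then a.Isyn ∪ {x} else a.Isyn ∪ {x, y})
  | .sell x y a => if x = y then a.Isyn else a.Isyn ∪ {x, y}
  | .selr x y a => if x = y then a.Isyn else a.Isyn ∪ ({x, y} \ a.Osyn)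

end LIF

/-- Off its syntactic outputs, an expression acts as the identity. -/
theorem LIF.inertia {Name V dom : Type*} {voc : Vocab Name} [DecidableEq V]
    (D : Interp Name dom) (α : LIF Name V voc) :
    ∀ μ ν : V → dom, (μ, ν) ∈ α.sem D → ∀ v, v ∉ α.Osyn → μ v = ν v := by
  induction α with
  | idE => intro μ ν h v _; exact congrFun h v
  | atom M xs ys hx hy =>
    intro μ ν h v hv
    exact h.2 v (by simpa [LIF.Osyn] using hv)
  | union a b iha ihb =>
    intro μ ν h v hv
    simp only [LIF.Osyn, Finset.mem_union, not_or] at hv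
    exact h.elim (fun h => iha _ _ h v hv.1) (fun h => ihb _ _ h v hv.2)
  | inter a b iha ihb =>
    intro μ ν h v hv
    simp only [LIF.Osyn, Finset.mem_inter] at hv
    by_cases hva : v ∈ a.Osyn
    · exact ihb _ _ h.2 v (fun hb => hv ⟨hva, hb⟩)
    · exact iha _ _ h.1 v hva
  | diff a b iha ihb => intro μ ν h v hv; exact iha _ _ h.1 v hv
  | comp a b iha ihb =>
    rintro μ ν ⟨κ, h1, h2⟩ v hv
    simp only [LIF.Osyn, Finset.mem_union, not_or] at hv
    exact (iha _ _ h1 v hv.1).trans (ihb _ _ h2 v hv.2)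
  | cyll Z a ih =>
    rintro μ ν ⟨κ, h1, h2⟩ v hv
    simp only [LIF.Osyn, Finset.mem_union, not_or] at hv
    exact (h2 v (by simpa using hv.2)).symm.trans (ih _ _ h1 v hv.1)
  | cylr Z a ih =>
    rintro μ ν ⟨κ, h1, h2⟩ v hv
    simp only [LIF.Osyn, Finset.mem_union, not_or] at hv
    exact (ih _ _ h1 v hv.1).trans (h2 v (by simpa using hv.2))
  | sellr x y a ih =>
    rintro μ ν ⟨h1, h2⟩ v hv
    have := ih _ _ h1 v
    simp only [LIF.Osyn] at hv
    grind
  | sell x y a ih => rintro μ ν ⟨h1, h2⟩ v hv; exact ih _ _ h1 v hv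
  | selr x y a ih => rintro μ ν ⟨h1, h2⟩ v hv; exact ih _ _ h1 v hv

/-- Explicit form of determinacy: the new right valuation is forced. -/
theorem LIF.determinacy {Name V dom : Type*} {voc : Vocab Name} [DecidableEq V]
    (D : Interp Name dom) (α : LIF Name V voc) :
    ∀ μ ν μ' ν' : V → dom, (μ, ν) ∈ α.sem D → (∀ v ∈ α.Isyn, μ' v = μ v) →
      (∀ v ∈ α.Osyn, ν' v = ν v) → (∀ v, v ∉ α.Osyn → ν' v = μ' v) →
      (μ', ν') ∈ α.sem D := by
  induction α with
  | idE =>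
    intro μ ν μ' ν' h hi ho hn
    exact funext fun v => (hn v (by simp [LIF.Osyn])).symm
  | atom M xs ys hx hy =>
    intro μ ν μ' ν' h hi ho hn
    simp only [LIF.Isyn, LIF.Osyn, List.mem_toFinset] at hi ho hn
    refine ⟨?_, fun v hv => (hn v hv).symm⟩
    have h1 := h.1
    have e1 : xs.map μ' = xs.map μ := List.map_congr_left hi
    have e2 : ys.map ν' = ys.map ν := List.map_congr_left ho
    simpa only [e1, e2] using h1
  | union a b iha ihb =>
    intro μ ν μ' ν' h hi ho hn
    simp only [LIF.Isyn, LIF.Osyn, Finset.mem_union, Finset.mem_sdiff] at hi ho hn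
    rcases h with h | h
    · left
      have := LIF.inertia D a _ _ h
      apply iha _ _ _ _ h <;> grind
    · right
      have := LIF.inertia D b _ _ h
      apply ihb _ _ _ _ h <;> grind
  | inter a b iha ihb =>
    intro μ ν μ' ν' h hi ho hn
    simp only [LIF.Isyn, LIF.Osyn, Finset.mem_union, Finset.mem_sdiff, Finset.mem_inter] at hi ho hn
    have h1 := LIF.inertia D a _ _ h.1
    have h2 := LIF.inertia D b _ _ h.2
    constructor
    · apply iha _ _ _ _ h.1 <;> grind
    · apply ihb _ _ _ _ h.2 <;> grind
  | diff a b iha ihb =>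
    intro μ ν μ' ν' h hi ho hn
    simp only [LIF.Isyn, LIF.Osyn, Finset.mem_union, Finset.mem_sdiff] at hi ho hn
    have h1 := LIF.inertia D a _ _ h.1
    refine ⟨iha _ _ _ _ h.1 (by grind) ho hn, fun hb => h.2 ?_⟩
    have h2 := LIF.inertia D b _ _ hb
    apply ihb _ _ _ _ hb <;> grind
  | comp a b iha ihb =>
    rintro μ ν μ' ν' ⟨κ, ha, hb⟩ hi ho hn
    simp only [LIF.Isyn, LIF.Osyn, Finset.mem_union, Finset.mem_sdiff] at hi ho hn
    have h1 := LIF.inertia D a _ _ ha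
    have h2 := LIF.inertia D b _ _ hb
    refine ⟨fun v => if v ∈ a.Osyn then κ v else μ' v, iha _ _ _ _ ha ?_ ?_ ?_,
      ihb _ _ _ _ hb ?_ ?_ ?_⟩ <;> grind
  | cyll Z a ih =>
    rintro μ ν μ' ν' ⟨κ, ha, hk⟩ hi ho hn
    simp only [LIF.Isyn, LIF.Osyn, Finset.mem_union, Finset.mem_sdiff] at hi ho hn
    have h1 := LIF.inertia D a _ _ ha
    have hk' : ∀ v, v ∉ Z → κ v = μ v := fun v hv => hk v (by simpa using hv)
    refine ⟨fun v => if v ∈ Z then κ v else μ' v, ih _ _ _ _ ha ?_ ?_ ?_, fun v hv => ?_⟩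
    · grind
    · grind
    · grind
    · exact if_neg (by simpa using hv)
  | cylr Z a ih =>
    rintro μ ν μ' ν' ⟨κ, ha, hk⟩ hi ho hn
    simp only [LIF.Isyn, LIF.Osyn, Finset.mem_union] at hi ho hn
    have hk' : ∀ v, v ∉ Z → κ v = ν v := fun v hv => hk v (by simpa using hv)
    refine ⟨fun v => if v ∈ a.Osyn then κ v else μ' v, ih _ _ _ _ ha ?_ ?_ ?_, fun v hv => ?_⟩
    · grind
    · grind
    · grind
    · have hv' : v ∉ Z := by simpa using hv
      grind
  | sellr x y a ih =>
    rintro μ ν μ' ν' ⟨ha, hk⟩ hi ho hn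
    simp only [LIF.Isyn, LIF.Osyn] at hi ho hn
    have h1 := LIF.inertia D a _ _ ha
    dsimp only at hk
    refine ⟨ih _ _ _ _ ha ?_ ?_ ?_, ?_⟩
    · grind
    · grind
    · grind
    · change μ' x = ν' y
      grind
  | sell x y a ih =>
    rintro μ ν μ' ν' ⟨ha, hk⟩ hi ho hn
    simp only [LIF.Isyn, LIF.Osyn] at hi ho hn
    dsimp only at hk
    refine ⟨ih _ _ _ _ ha ?_ ho hn, ?_⟩
    · grind
    · change μ' x = μ' y
      grind
  | selr x y a ih =>
    rintro μ ν μ' ν' ⟨ha, hk⟩ hi ho hn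
    simp only [LIF.Isyn, LIF.Osyn] at hi ho hn
    have h1 := LIF.inertia D a _ _ ha
    dsimp only at hk
    refine ⟨ih _ _ _ _ ha ?_ ho hn, ?_⟩
    · grind
    · change ν' x = ν' y
      grind

/-- Soundness Theorem: `(I^syn, O^syn)` is a sound input–output definition. -/
theorem stmt7 {Name V : Type*} [Nonempty Name] {voc : Vocab Name} [DecidableEq V]
    (dom : Type*) [Countable dom] [Infinite dom] :
    (∀ (M : Name) (xs ys : List V) (hx : xs.length = voc.iar M)
        (hy : ys.length = voc.ar M - voc.iar M),
        (↑(LIF.Isyn (LIF.atom M xs ys hx hy)) : Set V) = {v | v ∈ xs} ∧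
        (↑(LIF.Osyn (LIF.atom M xs ys hx hy)) : Set V) = {v | v ∈ ys}) ∧
    (∀ α : LIF Name V voc, Osem (LIF.gsem dom α) ⊆ ↑α.Osyn) ∧
    (∀ α : LIF Name V voc, Determines (LIF.gsem dom α) ↑α.Isyn ↑α.Osyn) := by
  refine ⟨fun M xs ys hx hy => ⟨by ext; simp [LIF.Isyn], by ext; simp [LIF.Osyn]⟩, ?_, ?_⟩
  · rintro α x ⟨D, ⟨μ, ν⟩, hp, hx⟩
    by_contra hn
    exact hx (LIF.inertia D α μ ν hp x hn)
  · rintro α D ⟨μ, ν⟩ hp μ' hμ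
    refine ⟨fun v => if v ∈ α.Osyn then ν v else μ' v, fun v hv => if_pos hv, ?_⟩
    exact LIF.determinacy D α μ ν μ' _ hp hμ (fun v hv => if_pos hv) (fun v hv => if_neg hv)
end

section
/- (Inertia Property / Output Approximation) For every LIF expression α, every interpretation D, and every (ν1,ν2) ∈ ⟦α⟧_D, the valuations ν1 and ν2 agree outside O^syn(α); consequently O^sem(α) ⊆ O^syn(α). -/
theorem LIF.inertia_aux {Name V dom : Type*} {voc : Vocab Name} [DecidableEq V]
    (D : Interp Name dom) (α : LIF Name V voc) :
    ∀ ν1 ν2 : V → dom, (ν1, ν2) ∈ α.sem D → ∀ v, v ∉ α.Osyn → ν1 v = ν2 v := by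
  induction α with
  | idE =>
    intro ν1 ν2 h v _
    have h' : ν1 = ν2 := h
    rw [h']
  | atom M xs ys hx hy =>
    intro ν1 ν2 h v hv
    exact h.2 v (fun hm => hv (List.mem_toFinset.2 hm))
  | union a b iha ihb =>
    intro ν1 ν2 h v hv
    simp only [LIF.Osyn, Finset.mem_union, not_or] at hv
    rcases h with h | h
    · exact iha _ _ h v hv.1
    · exact ihb _ _ h v hv.2
  | inter a b iha ihb =>
    intro ν1 ν2 h v hv
    by_cases ha : v ∈ a.Osyn
    · exact ihb _ _ h.2 v (fun hb => hv (Finset.mem_inter.2 ⟨ha, hb⟩))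
    · exact iha _ _ h.1 v ha
  | diff a b iha ihb =>
    intro ν1 ν2 h v hv
    exact iha _ _ h.1 v hv
  | comp a b iha ihb =>
    intro ν1 ν2 h v hv
    simp only [LIF.Osyn, Finset.mem_union, not_or] at hv
    obtain ⟨ν3, h1, h2⟩ := h
    exact (iha _ _ h1 v hv.1).trans (ihb _ _ h2 v hv.2)
  | cyll Z a iha =>
    intro ν1 ν2 h v hv
    simp only [LIF.Osyn, Finset.mem_union, not_or] at hv
    obtain ⟨ν3, h1, h2⟩ := h
    exact (h2 v hv.2).symm.trans (iha _ _ h1 v hv.1)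
  | cylr Z a iha =>
    intro ν1 ν2 h v hv
    simp only [LIF.Osyn, Finset.mem_union, not_or] at hv
    obtain ⟨ν3, h1, h2⟩ := h
    exact (iha _ _ h1 v hv.1).trans (h2 v hv.2)
  | sellr x y a iha =>
    intro ν1 ν2 h v hv
    obtain ⟨h1, h2⟩ := h
    by_cases ha : v ∈ a.Osyn
    · by_cases hxy : x = y
      · subst hxy
        have hvx : v = x := by
          by_contra hne
          exact hv (by simp [LIF.Osyn, ha, hne])
        subst hvx
        exact h2
      · exact absurd (by simp [LIF.Osyn, ha, hxy]) hv
    · exact iha _ _ h1 v ha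
  | sell x y a iha =>
    intro ν1 ν2 h v hv
    exact iha _ _ h.1 v hv
  | selr x y a iha =>
    intro ν1 ν2 h v hv
    exact iha _ _ h.1 v hv

theorem stmt8 {Name V : Type*} [Nonempty Name] {voc : Vocab Name} [DecidableEq V]
    (dom : Type*) [Countable dom] [Infinite dom] :
    (∀ (α : LIF Name V voc) (D : Interp Name dom), ∀ p ∈ α.sem D,
        BRV.AgreeOn p.1 p.2 (↑α.Osyn)ᶜ) ∧
    (∀ α : LIF Name V voc, Osem (LIF.gsem dom α) ⊆ ↑α.Osyn) := by
  refine ⟨fun α D p hp v hv => LIF.inertia_aux D α p.1 p.2 hp v hv, ?_⟩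
  rintro α v ⟨D, p, hp, hne⟩
  by_contra hv
  exact hne (LIF.inertia_aux D α p.1 p.2 hp v hv)
end

section
/- (Syntactic Free Variable Property) For every LIF expression α, the global BRV of α is inertially cylindrified on V ∖ (I^syn(α) ∪ O^syn(α)). -/
theorem lif_inertia {Name V dom : Type*} {voc : Vocab Name} [DecidableEq V]
    (D : Interp Name dom) (α : LIF Name V voc) :
    ∀ p ∈ α.sem D, ∀ x, x ∉ α.Osyn → p.1 x = p.2 x := by
  induction α with
  | idE => intro p hp x _; exact congrFun hp x
  | atom M xs ys hx hy =>
    intro p hp x h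
    exact hp.2 x (by simpa [LIF.Osyn] using h)
  | union a b iha ihb =>
    intro p hp x h
    simp only [LIF.Osyn, Finset.mem_union, not_or] at h
    rcases hp with hp | hp
    · exact iha p hp x h.1
    · exact ihb p hp x h.2
  | inter a b iha ihb =>
    intro p hp x h
    simp only [LIF.Osyn, Finset.mem_inter, not_and_or] at h
    rcases h with h | h
    · exact iha p hp.1 x h
    · exact ihb p hp.2 x h
  | diff a b iha ihb => intro p hp x h; exact iha p hp.1 x h
  | comp a b iha ihb =>
    intro p hp x h
    simp only [LIF.Osyn, Finset.mem_union, not_or] at h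
    obtain ⟨ν, h1, h2⟩ := hp
    exact (iha _ h1 x h.1).trans (ihb _ h2 x h.2)
  | cyll Z a ih =>
    intro p hp x h
    simp only [LIF.Osyn, Finset.mem_union, not_or] at h
    obtain ⟨ν, h1, h2⟩ := hp
    exact (h2 x (by simpa using h.2)).symm.trans (ih _ h1 x h.1)
  | cylr Z a ih =>
    intro p hp x h
    simp only [LIF.Osyn, Finset.mem_union, not_or] at h
    obtain ⟨ν, h1, h2⟩ := hp
    exact (ih _ h1 x h.1).trans (h2 x (by simpa using h.2))
  | sellr y z a ih =>
    intro p hp x h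
    by_cases hx : x ∈ a.Osyn
    · by_cases hyz : y = z
      · subst hyz
        have : x = y := by
          by_contra hne
          exact h (by simp [LIF.Osyn, hx, hne])
        subst this
        exact hp.2
      · exact absurd hx (by simpa [LIF.Osyn, hyz] using h)
    · exact ih p hp.1 x hx
  | sell y z a ih => intro p hp x h; exact ih p hp.1 x h
  | selr y z a ih => intro p hp x h; exact ih p hp.1 x h

theorem patch_agree {V dom : Type*} {ν μ : V → dom} {Y : Set V}
    (h : BRV.AgreeOn ν μ Y) (ν' : V → dom) (X : Set V) :
    BRV.AgreeOn (patch ν ν' X) (patch μ ν' X) Y := by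
  intro y hy
  simp only [patch, h y hy]

theorem patch_notMem {V dom : Type*} {ν ν' : V → dom} {X : Set V} {v : V}
    (h : v ∉ X) : patch ν ν' X v = ν v := by
  simp [patch, h]

theorem patch_back {V dom : Type*} {ν ν' μ : V → dom} {X : Set V}
    (h : ∀ v ∈ X, μ v = ν v) : patch (patch ν ν' X) μ X = ν := by
  funext v
  by_cases hv : v ∈ X
  · simp [patch, hv, h v hv]
  · simp [patch, hv]

theorem lif_patch {Name V dom : Type*} {voc : Vocab Name} [DecidableEq V]
    (D : Interp Name dom) (X : Set V) (α : LIF Name V voc) :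
    (∀ x ∈ X, x ∉ α.Isyn ∧ x ∉ α.Osyn) → ∀ p ∈ α.sem D, ∀ ν' : V → dom,
      (patch p.1 ν' X, patch p.2 ν' X) ∈ α.sem D := by
  induction α with
  | idE =>
    intro _ p hp ν'
    have h : p.1 = p.2 := hp
    change patch p.1 ν' X = patch p.2 ν' X
    rw [h]
  | atom M xs ys hx hy =>
    intro hX p hp ν'
    refine ⟨?_, patch_agree hp.2 ν' X⟩
    have h1 : xs.map (patch p.1 ν' X) = xs.map p.1 := by
      apply List.map_congr_left
      intro v hv
      exact patch_notMem fun h => (hX v h).1 (by simpa [LIF.Isyn] using hv)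
    have h2 : ys.map (patch p.2 ν' X) = ys.map p.2 := by
      apply List.map_congr_left
      intro v hv
      exact patch_notMem fun h => (hX v h).2 (by simpa [LIF.Osyn] using hv)
    change xs.map (patch p.1 ν' X) ++ ys.map (patch p.2 ν' X) ∈ D M
    rw [h1, h2]
    exact hp.1
  | union a b iha ihb =>
    intro hX p hp ν'
    simp only [LIF.Isyn, LIF.Osyn, Finset.mem_union, Finset.mem_sdiff] at hX
    rcases hp with hp | hp
    · exact Or.inl (iha (fun x hx => by have := hX x hx; tauto) p hp ν')
    · exact Or.inr (ihb (fun x hx => by have := hX x hx; tauto) p hp ν')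
  | inter a b iha ihb =>
    intro hX p hp ν'
    simp only [LIF.Isyn, LIF.Osyn, Finset.mem_union, Finset.mem_inter, Finset.mem_sdiff] at hX
    exact ⟨iha (fun x hx => by have := hX x hx; tauto) p hp.1 ν',
      ihb (fun x hx => by have := hX x hx; tauto) p hp.2 ν'⟩
  | diff a b iha ihb =>
    intro hX p hp ν'
    simp only [LIF.Isyn, LIF.Osyn, Finset.mem_union, Finset.mem_sdiff] at hX
    refine ⟨iha (fun x hx => by have := hX x hx; tauto) p hp.1 ν', fun hb => hp.2 ?_⟩
    have h := ihb (fun x hx => by have := hX x hx; tauto) _ hb p.1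
    simp only at h
    rw [patch_back (fun _ _ => rfl),
      patch_back (fun v hv => lif_inertia D a p hp.1 v (hX v hv).2)] at h
    exact h
  | comp a b iha ihb =>
    intro hX p hp ν'
    simp only [LIF.Isyn, LIF.Osyn, Finset.mem_union, Finset.mem_sdiff] at hX
    obtain ⟨ν, h1, h2⟩ := hp
    exact ⟨patch ν ν' X, iha (fun x hx => by have := hX x hx; tauto) _ h1 ν',
      ihb (fun x hx => by have := hX x hx; tauto) _ h2 ν'⟩
  | cyll Z a ih =>
    intro hX p hp ν'
    simp only [LIF.Isyn, LIF.Osyn, Finset.mem_union, Finset.mem_sdiff] at hX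
    obtain ⟨ν, h1, h2⟩ := hp
    exact ⟨patch ν ν' X, ih (fun x hx => by have := hX x hx; tauto) _ h1 ν',
      patch_agree h2 ν' X⟩
  | cylr Z a ih =>
    intro hX p hp ν'
    simp only [LIF.Isyn, LIF.Osyn, Finset.mem_union] at hX
    obtain ⟨ν, h1, h2⟩ := hp
    exact ⟨patch ν ν' X, ih (fun x hx => by have := hX x hx; tauto) _ h1 ν',
      patch_agree h2 ν' X⟩
  | sellr y z a ih =>
    intro hX p hp ν'
    have hX' : ∀ x ∈ X, x ∉ a.Isyn ∧ x ∉ a.Osyn := by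
      intro x hx
      have := hX x hx
      simp only [LIF.Isyn, LIF.Osyn] at this
      grind
    have hm := ih hX' p hp.1 ν'
    refine ⟨hm, ?_⟩
    by_cases hyz : y = z
    · subst hyz
      by_cases hy : y ∈ a.Osyn
      · have hn : y ∉ X := fun h => (hX' y h).2 hy
        change patch p.1 ν' X y = patch p.2 ν' X y
        rw [patch_notMem hn, patch_notMem hn]
        exact hp.2
      · exact lif_inertia D a _ hm y hy
    · have hy : y ∉ X := fun h => by
        have := hX y h
        simp only [LIF.Isyn, LIF.Osyn, hyz] at this
        grind
      have hz : z ∉ X := fun h => by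
        have := hX z h
        simp only [LIF.Isyn, LIF.Osyn, hyz] at this
        grind
      change patch p.1 ν' X y = patch p.2 ν' X z
      rw [patch_notMem hy, patch_notMem hz]
      exact hp.2
  | sell y z a ih =>
    intro hX p hp ν'
    have hX' : ∀ x ∈ X, x ∉ a.Isyn ∧ x ∉ a.Osyn := by
      intro x hx
      have := hX x hx
      simp only [LIF.Isyn, LIF.Osyn] at this
      grind
    refine ⟨ih hX' p hp.1 ν', ?_⟩
    by_cases hyz : y = z
    · subst hyz; rfl
    · have hy : y ∉ X := fun h => by
        have := hX y h
        simp [LIF.Isyn, LIF.Osyn, hyz] at this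
      have hz : z ∉ X := fun h => by
        have := hX z h
        simp [LIF.Isyn, LIF.Osyn, hyz] at this
      change patch p.1 ν' X y = patch p.1 ν' X z
      rw [patch_notMem hy, patch_notMem hz]
      exact hp.2
  | selr y z a ih =>
    intro hX p hp ν'
    have hX' : ∀ x ∈ X, x ∉ a.Isyn ∧ x ∉ a.Osyn := by
      intro x hx
      have := hX x hx
      simp only [LIF.Isyn, LIF.Osyn] at this
      grind
    refine ⟨ih hX' p hp.1 ν', ?_⟩
    by_cases hyz : y = z
    · subst hyz; rfl
    · have hy : y ∉ X := fun h => by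
        have := hX y h
        simp [LIF.Isyn, LIF.Osyn, hyz] at this
        grind
      have hz : z ∉ X := fun h => by
        have := hX z h
        simp [LIF.Isyn, LIF.Osyn, hyz] at this
        grind
      change patch p.2 ν' X y = patch p.2 ν' X z
      rw [patch_notMem hy, patch_notMem hz]
      exact hp.2

theorem stmt9 {Name V : Type*} [Nonempty Name] {voc : Vocab Name} [DecidableEq V]
    (dom : Type*) [Countable dom] [Infinite dom]
    (α : LIF Name V voc) :
    InertCyl (LIF.gsem dom α) (↑(α.Isyn ∪ α.Osyn))ᶜ := by
  have key : ∀ x ∈ ((↑(α.Isyn ∪ α.Osyn) : Set V))ᶜ, x ∉ α.Isyn ∧ x ∉ α.Osyn := by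
    intro x hx
    simpa using hx
  refine ⟨?_, fun D p hp ν' => lif_patch D _ α key p hp ν'⟩
  rintro x hx ⟨D, p, hp, hne⟩
  exact hne (lif_inertia D α p hp x (key x hx).2)
end

section
/- (Precision Theorem) Let α be a LIF expression that is either an atomic module expression, or a unary LIF operator (a cylindrification or a selection) applied to an atomic module expression, or a binary LIF operator (∪, ∩, ∖, ;) applied to two atomic module expressions involving distinct module names. Then O^sem(α) = O^syn(α) and I^sem(α) = I^syn(α). -/
section Precision

variable {Name V : Type*} {voc : Vocab Name}

/-- `α` is an atomic module expression. -/
def LIF.IsAtom : LIF Name V voc → Prop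
  | .atom _ _ _ _ _ => True
  | _ => False

/-- `a` and `b` are atomic module expressions involving distinct module names. -/
def DistinctAtoms (a b : LIF Name V voc) : Prop :=
  ∃ (M1 : Name) (xs1 ys1 : List V) (hx1 : xs1.length = voc.iar M1)
    (hy1 : ys1.length = voc.ar M1 - voc.iar M1)
    (M2 : Name) (xs2 ys2 : List V) (hx2 : xs2.length = voc.iar M2)
    (hy2 : ys2.length = voc.ar M2 - voc.iar M2),
    a = LIF.atom M1 xs1 ys1 hx1 hy1 ∧ b = LIF.atom M2 xs2 ys2 hx2 hy2 ∧ M1 ≠ M2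

/-- `α` is atomic, or a unary operator applied to an atomic module expression,
or a binary operator applied to two atomic module expressions with distinct names. -/
def PrecisionShape : LIF Name V voc → Prop
  | .idE => False
  | .atom _ _ _ _ _ => True
  | .union a b => DistinctAtoms a b
  | .inter a b => DistinctAtoms a b
  | .diff a b  => DistinctAtoms a b
  | .comp a b  => DistinctAtoms a b
  | .cyll _ a  => a.IsAtom
  | .cylr _ a  => a.IsAtom
  | .sellr _ _ a => a.IsAtom
  | .sell _ _ a  => a.IsAtom
  | .selr _ _ a  => a.IsAtom

end Precision


open Function in
theorem prec_aux {V dom J : Type*} [DecidableEq V] (Q : GBRV V dom J) (O I : Finset V)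
    (h1 : ∀ D, ∀ p ∈ Q D, ∀ z, z ∉ O → p.1 z = p.2 z)
    (h2 : ∀ z ∈ O, ∃ D p, p ∈ Q D ∧ p.1 z ≠ p.2 z)
    (h3 : ∀ z, z ∉ I → ∀ D ν1 ν2, (ν1, ν2) ∈ Q D → ∀ c,
      (z ∈ O → (update ν1 z c, ν2) ∈ Q D) ∧ (z ∉ O → (update ν1 z c, update ν2 z c) ∈ Q D))
    (h4 : ∀ z ∈ I, ∃ D ν1 ν2 c, (ν1, ν2) ∈ Q D ∧
      ∀ ν2', (∀ y ∈ O, ν2' y = ν2 y) → (update ν1 z c, ν2') ∉ Q D) :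
    Osem Q = ↑O ∧ Isem Q = ↑I := by
  have hO : Osem Q = ↑O := by
    ext z
    constructor
    · rintro ⟨D, p, hp, hz⟩
      by_contra hzO
      exact hz (h1 D p hp z (by simpa using hzO))
    · intro hz
      exact h2 z (by simpa using hz)
  refine ⟨hO, ?_⟩
  ext z
  simp only [Isem, hO, Set.mem_ofPred_eq]
  constructor
  · intro h
    by_contra hz
    apply h
    rintro D ⟨ν1, ν2⟩ hp ν1' hag
    have e : ν1' = update ν1 z (ν1' z) := by
      funext v
      by_cases hv : v = z
      · subst hv; simp
      · rw [update_of_ne hv]; exact hag v (by simpa using hv)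
    obtain ⟨ha, hb⟩ := h3 z (by simpa using hz) D ν1 ν2 hp (ν1' z)
    rw [e]
    by_cases hzO : z ∈ O
    · exact ⟨ν2, fun _ _ => rfl, by simpa using ha hzO⟩
    · refine ⟨update ν2 z (ν1' z), ?_, by simpa using hb hzO⟩
      intro y hy
      have : y ≠ z := by rintro rfl; exact hzO (by simpa using hy)
      simp [this]
  · intro hz hdet
    obtain ⟨D, ν1, ν2, c, hp, hn⟩ := h4 z (by simpa using hz)
    obtain ⟨ν2', hag, hm⟩ := hdet D (ν1, ν2) hp (update ν1 z c) (by
      intro y hy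
      have : y ≠ z := by simpa using hy
      simp [this])
    exact hn ν2' (fun y hy => hag y (by simpa using hy)) hm

/-- The relation of all tuples constantly `a`. -/
def constRel {dom : Type*} (a : dom) : Set (List dom) := {l | ∀ u ∈ l, u = a}

section
set_option linter.unusedSectionVars false
open Function
variable {Name V dom : Type*} {voc : Vocab Name} [DecidableEq V]

theorem map_upd {xs : List V} {z : V} (h : z ∉ xs) (ν : V → dom) (c : dom) :
    xs.map (update ν z c) = xs.map ν := by
  apply List.map_congr_left
  intro y hy
  have : y ≠ z := by rintro rfl; exact h hy
  simp [this]

/-- Unfolded semantics of an atom with relation `R`. -/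
def At (R : Set (List dom)) (xs ys : List V) (ν1 ν2 : V → dom) : Prop :=
  xs.map ν1 ++ ys.map ν2 ∈ R ∧ ∀ v, v ∉ ys → ν1 v = ν2 v

theorem mem_atom (D : Interp Name dom) (M : Name) (xs ys : List V) hx hy (ν1 ν2 : V → dom) :
    (ν1, ν2) ∈ LIF.sem D (LIF.atom (voc := voc) M xs ys hx hy) ↔ At (D M) xs ys ν1 ν2 := by
  simp [LIF.sem, At, BRV.AgreeOn]

theorem At_const (a : dom) (xs ys : List V) (ν1 ν2 : V → dom) :
    At (constRel a) xs ys ν1 ν2 ↔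
      (∀ v ∈ xs, ν1 v = a) ∧ (∀ v ∈ ys, ν2 v = a) ∧ ∀ v, v ∉ ys → ν1 v = ν2 v := by
  simp only [At, constRel, Set.mem_ofPred_eq, List.mem_append, List.mem_map]
  constructor
  · rintro ⟨h, h'⟩
    exact ⟨fun v hv => h _ (Or.inl ⟨v, hv, rfl⟩), fun v hv => h _ (Or.inr ⟨v, hv, rfl⟩), h'⟩
  · rintro ⟨h1, h2, h'⟩
    refine ⟨?_, h'⟩
    rintro u (⟨v, hv, rfl⟩ | ⟨v, hv, rfl⟩)
    · exact h1 v hv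
    · exact h2 v hv

theorem At_univ (xs ys : List V) (ν1 ν2 : V → dom) :
    At Set.univ xs ys ν1 ν2 ↔ ∀ v, v ∉ ys → ν1 v = ν2 v := by
  simp [At]

theorem At_empty (xs ys : List V) (ν1 ν2 : V → dom) :
    At ∅ xs ys ν1 ν2 ↔ False := by
  simp [At]

theorem At_eq {R : Set (List dom)} {xs ys : List V} {ν1 ν2 : V → dom}
    (h : At R xs ys ν1 ν2) {v : V} (hv : v ∉ ys) : ν1 v = ν2 v := h.2 v hv

theorem At_in {R : Set (List dom)} {xs ys : List V} {ν1 ν2 : V → dom} {z : V} {c : dom}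
    (hz : z ∉ xs) (hy : z ∈ ys) : At R xs ys (update ν1 z c) ν2 ↔ At R xs ys ν1 ν2 := by
  simp only [At, map_upd hz]
  grind

theorem At_out {R : Set (List dom)} {xs ys : List V} {ν1 ν2 : V → dom} {z : V} {c : dom}
    (hz : z ∉ xs) (hy : z ∉ ys) (he : ν1 z = ν2 z) :
    At R xs ys (update ν1 z c) (update ν2 z c) ↔ At R xs ys ν1 ν2 := by
  simp only [At, map_upd hz, map_upd hy]
  grind

theorem At_upd {R : Set (List dom)} {xs ys : List V} {ν1 ν2 : V → dom} {z : V} {c : dom}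
    (hz : z ∉ xs) (h : At R xs ys ν1 ν2) :
    (z ∈ ys → At R xs ys (update ν1 z c) ν2) ∧
    (z ∉ ys → At R xs ys (update ν1 z c) (update ν2 z c)) :=
  ⟨fun hy => (At_in hz hy).2 h, fun hy => (At_out hz hy (At_eq h hy)).2 h⟩

/-- Changing a variable outside both lists on the output only affects the inertia. -/
theorem At_mem {R : Set (List dom)} {xs ys : List V} {ν1 ν2 : V → dom}
    (h : At R xs ys ν1 ν2) : ∀ v, v ∉ ys → ν1 v = ν2 v := h.2

end

open Function Classical in
/-- Precision Theorem. -/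
theorem stmt11 {Name V : Type*} [Nonempty Name] {voc : Vocab Name} [DecidableEq V]
    (dom : Type*) [Countable dom] [Infinite dom]
    (α : LIF Name V voc) (hshape : PrecisionShape α) :
    Osem (LIF.gsem dom α) = ↑α.Osyn ∧ Isem (LIF.gsem dom α) = ↑α.Isyn := by
  obtain ⟨a, b, hab⟩ := exists_pair_ne dom
  let ka : V → dom := fun _ => a
  cases α with
  | idE => exact hshape.elim
  | atom M xs ys hx hy =>
    apply prec_aux
    all_goals simp only [Prod.forall, Prod.exists, LIF.gsem, mem_atom, LIF.Osyn, LIF.Isyn,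
      List.mem_toFinset]
    · grind [At_mem]
    · intro z hz
      refine ⟨fun _ => Set.univ, update ka z b, ka, ?_⟩
      simp only [At_univ]; grind
    · intro z hz D ν1 ν2 h c
      exact At_upd hz h
    · intro z hz
      refine ⟨fun _ => constRel a, ka, ka, b, ?_⟩
      simp only [At_const]; grind
  | union α β =>
    obtain ⟨M1, xs1, ys1, hx1, hy1, M2, xs2, ys2, hx2, hy2, rfl, rfl, hne⟩ := hshape
    apply prec_aux
    all_goals simp only [Prod.forall, Prod.exists, LIF.gsem, LIF.sem.eq_3, Set.mem_union, mem_atom,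
      LIF.Osyn, LIF.Isyn, List.mem_toFinset, Finset.mem_union, Finset.mem_sdiff]
    · grind [At_mem]
    · intro z hz
      refine ⟨fun _ => Set.univ, update ka z b, ka, ?_⟩
      simp only [At_univ]; grind
    · intro z hz D ν1 ν2 h c
      have k1 := @At_upd V dom _ (D M1) xs1 ys1 ν1 ν2 z c
      have k2 := @At_upd V dom _ (D M2) xs2 ys2 ν1 ν2 z c
      grind
    · intro z hz
      by_cases h : z ∈ xs1 ∨ (z ∈ ys2 ∧ z ∉ ys1)
      · refine ⟨fun N => if N = M1 then constRel a else ∅, ka, ka, b, ?_⟩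
        simp only [if_true, if_neg hne.symm, At_const, At_empty]; grind
      · refine ⟨fun N => if N = M1 then ∅ else constRel a, ka, ka, b, ?_⟩
        simp only [if_true, if_neg hne.symm, At_const, At_empty]; grind
  | inter α β =>
    obtain ⟨M1, xs1, ys1, hx1, hy1, M2, xs2, ys2, hx2, hy2, rfl, rfl, hne⟩ := hshape
    apply prec_aux
    all_goals simp only [Prod.forall, Prod.exists, LIF.gsem, LIF.sem.eq_4, Set.mem_inter_iff,
      mem_atom, LIF.Osyn, LIF.Isyn, List.mem_toFinset, Finset.mem_union, Finset.mem_sdiff,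
      Finset.mem_inter]
    · grind [At_mem]
    · intro z hz
      refine ⟨fun _ => Set.univ, update ka z b, ka, ?_⟩
      simp only [At_univ]; grind
    · intro z hz D ν1 ν2 h c
      have k1 := @At_upd V dom _ (D M1) xs1 ys1 ν1 ν2 z c
      have k2 := @At_upd V dom _ (D M2) xs2 ys2 ν1 ν2 z c
      grind
    · intro z hz
      refine ⟨fun _ => constRel a, ka, ka, b, ?_⟩
      simp only [At_const]; grind
  | diff α β =>
    obtain ⟨M1, xs1, ys1, hx1, hy1, M2, xs2, ys2, hx2, hy2, rfl, rfl, hne⟩ := hshape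
    apply prec_aux
    all_goals simp only [Prod.forall, Prod.exists, LIF.gsem, LIF.sem.eq_5, Set.mem_sdiff,
      mem_atom, LIF.Osyn, LIF.Isyn, List.mem_toFinset, Finset.mem_union, Finset.mem_sdiff]
    · grind [At_mem]
    · intro z hz
      refine ⟨fun N => if N = M1 then Set.univ else ∅, update ka z b, ka, ?_⟩
      simp only [if_true, if_neg hne.symm, At_univ, At_empty]; grind
    · intro z hz D ν1 ν2 h c
      have k1 := @At_upd V dom _ (D M1) xs1 ys1 ν1 ν2 z c
      have k2 := @At_in V dom _ (D M2) xs2 ys2 ν1 ν2 z c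
      have k3 := @At_out V dom _ (D M2) xs2 ys2 ν1 ν2 z c
      have k4 := At_mem h.1 z
      grind
    · intro z hz
      by_cases h : z ∈ xs1
      · refine ⟨fun N => if N = M1 then constRel a else ∅, ka, ka, b, ?_⟩
        simp only [if_true, if_neg hne.symm, At_const, At_empty]; grind
      · refine ⟨fun N => if N = M1 then Set.univ else constRel a, update ka z b,
          if z ∈ ys1 then ka else update ka z b, a, ?_⟩
        simp only [if_true, if_neg hne.symm, At_const, At_univ]
        have e : update (update ka z b) z a = ka := by
          funext v; simp only [ka]; grind
        rw [e]
        refine ⟨?_, ?_⟩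
        · split_ifs
          · grind
          · grind
        · intro ν' hν' hh
          apply hh.2
          have : ∀ v, ν' v = a := by
            intro v
            by_cases hv : v ∈ ys1
            · rw [hν' v hv]; split_ifs <;> grind
            · exact (hh.1 v hv).symm
          grind
  | comp α β =>
    obtain ⟨M1, xs1, ys1, hx1, hy1, M2, xs2, ys2, hx2, hy2, rfl, rfl, hne⟩ := hshape
    apply prec_aux
    all_goals simp only [Prod.forall, Prod.exists, LIF.gsem, LIF.sem.eq_6, BRV.comp,
      Set.mem_ofPred_eq,
      mem_atom, LIF.Osyn, LIF.Isyn, List.mem_toFinset, Finset.mem_union, Finset.mem_sdiff]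
    · grind [At_mem]
    · intro z hz
      by_cases h : z ∈ ys1
      · refine ⟨fun _ => Set.univ, update ka z b, ka, ⟨ka, ?_⟩, ?_⟩
        · simp only [At_univ]; grind
        · grind
      · refine ⟨fun _ => Set.univ, update ka z b, ka, ⟨update ka z b, ?_⟩, ?_⟩
        · simp only [At_univ]; grind
        · grind
    · rintro z hz D ν1 ν2 ⟨ν3, h1, h2⟩ c
      have k1 := @At_upd V dom _ (D M1) xs1 ys1 ν1 ν3 z c
      have k2 := @At_upd V dom _ (D M2) xs2 ys2 ν3 ν2 z c
      by_cases h : z ∈ ys1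
      · exact ⟨fun _ => ⟨ν3, by grind⟩, by grind⟩
      · exact ⟨fun _ => ⟨update ν3 z c, by grind⟩, fun _ => ⟨update ν3 z c, by grind⟩⟩
    · intro z hz
      refine ⟨fun _ => constRel a, ka, ka, b, ⟨ka, ?_⟩, ?_⟩
      · simp only [At_const]; grind
      · simp only [At_const]; grind
  | cyll Z α =>
    cases α <;> try exact hshape.elim
    rename_i M xs ys hx hy
    apply prec_aux
    all_goals simp only [Prod.forall, Prod.exists, LIF.gsem, LIF.sem.eq_7, BRV.cyll, BRV.AgreeOn,
      Set.mem_ofPred_eq, Set.mem_compl_iff, Finset.mem_coe,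
      mem_atom, LIF.Osyn, LIF.Isyn, List.mem_toFinset, Finset.mem_union, Finset.mem_sdiff]
    · grind [At_mem]
    · intro z hz
      by_cases h : z ∈ Z
      · refine ⟨fun _ => Set.univ, update ka z b, ka, ⟨ka, ?_⟩, ?_⟩
        · simp only [At_univ]; grind
        · grind
      · refine ⟨fun _ => Set.univ, update ka z b, ka, ⟨update ka z b, ?_⟩, ?_⟩
        · simp only [At_univ]; grind
        · grind
    · rintro z hz D ν1 ν2 ⟨ν3, h1, h2⟩ c
      have k1 := @At_upd V dom _ (D M) xs ys ν3 ν2 z c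
      by_cases h : z ∈ Z
      · exact ⟨fun _ => ⟨ν3, by grind⟩, by grind⟩
      · exact ⟨fun _ => ⟨update ν3 z c, by grind⟩, fun _ => ⟨update ν3 z c, by grind⟩⟩
    · intro z hz
      refine ⟨fun _ => constRel a, ka, ka, b, ⟨ka, ?_⟩, ?_⟩
      · simp only [At_const]; grind
      · simp only [At_const]; grind
  | cylr Z α =>
    cases α <;> try exact hshape.elim
    rename_i M xs ys hx hy
    apply prec_aux
    all_goals simp only [Prod.forall, Prod.exists, LIF.gsem, LIF.sem.eq_8, BRV.cylr, BRV.AgreeOn,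
      Set.mem_ofPred_eq, Set.mem_compl_iff, Finset.mem_coe,
      mem_atom, LIF.Osyn, LIF.Isyn, List.mem_toFinset, Finset.mem_union, Finset.mem_sdiff]
    · grind [At_mem]
    · intro z hz
      by_cases h : z ∈ Z
      · refine ⟨fun _ => Set.univ, update ka z b, ka, ⟨update ka z b, ?_⟩, ?_⟩
        · simp only [At_univ]; grind
        · grind
      · refine ⟨fun _ => Set.univ, update ka z b, ka, ⟨ka, ?_⟩, ?_⟩
        · simp only [At_univ]; grind
        · grind
    · rintro z hz D ν1 ν2 ⟨ν3, h1, h2⟩ c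
      have k1 := @At_upd V dom _ (D M) xs ys ν1 ν3 z c
      by_cases h : z ∈ ys
      · exact ⟨fun _ => ⟨ν3, by grind⟩, by grind⟩
      · exact ⟨fun _ => ⟨update ν3 z c, by grind⟩, fun _ => ⟨update ν3 z c, by grind⟩⟩
    · intro z hz
      refine ⟨fun _ => constRel a, ka, ka, b, ⟨ka, ?_⟩, ?_⟩
      · simp only [At_const]; grind
      · simp only [At_const]; grind
  | sellr x y α =>
    cases α <;> try exact hshape.elim
    rename_i M xs ys hx hy
    apply prec_aux
    all_goals simp only [Prod.forall, Prod.exists, LIF.gsem, LIF.sem.eq_9, BRV.sellr,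
      Set.mem_ofPred_eq, mem_atom, LIF.Osyn, LIF.Isyn, List.mem_toFinset]
    · grind [At_mem, List.mem_toFinset]
    · intro z hz
      by_cases h : z = x
      · refine ⟨fun _ => Set.univ, ka, update ka z b, ?_⟩
        simp only [At_univ]; grind [List.mem_toFinset]
      · refine ⟨fun _ => Set.univ, update ka z b, ka, ?_⟩
        simp only [At_univ]; grind [List.mem_toFinset]
    · intro z hz D ν1 ν2 h c
      have k1 := @At_upd V dom _ (D M) xs ys ν1 ν2 z c
      have k2 := At_mem h.1
      grind [List.mem_toFinset]
    · intro z hz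
      refine ⟨fun _ => constRel a, ka, ka, b, ?_⟩
      simp only [At_const]; grind [List.mem_toFinset]
  | sell x y α =>
    cases α <;> try exact hshape.elim
    rename_i M xs ys hx hy
    apply prec_aux
    all_goals simp only [Prod.forall, Prod.exists, LIF.gsem, LIF.sem.eq_10, BRV.sell,
      Set.mem_ofPred_eq, mem_atom, LIF.Osyn, LIF.Isyn, List.mem_toFinset]
    · grind [At_mem, List.mem_toFinset]
    · intro z hz
      refine ⟨fun _ => Set.univ, ka, update ka z b, ?_⟩
      simp only [At_univ]; grind [List.mem_toFinset]
    · intro z hz D ν1 ν2 h c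
      have k1 := @At_upd V dom _ (D M) xs ys ν1 ν2 z c
      grind [List.mem_toFinset]
    · intro z hz
      refine ⟨fun _ => constRel a, ka, ka, b, ?_⟩
      simp only [At_const]; grind [List.mem_toFinset]
  | selr x y α =>
    cases α <;> try exact hshape.elim
    rename_i M xs ys hx hy
    apply prec_aux
    all_goals simp only [Prod.forall, Prod.exists, LIF.gsem, LIF.sem.eq_11, BRV.selr,
      Set.mem_ofPred_eq, mem_atom, LIF.Osyn, LIF.Isyn, List.mem_toFinset]
    · grind [At_mem, List.mem_toFinset]
    · intro z hz
      refine ⟨fun _ => Set.univ, update ka z b, ka, ?_⟩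
      simp only [At_univ]; grind [List.mem_toFinset]
    · intro z hz D ν1 ν2 h c
      have k1 := @At_upd V dom _ (D M) xs ys ν1 ν2 z c
      grind [List.mem_toFinset]
    · intro z hz
      refine ⟨fun _ => constRel a, ka, ka, b, ?_⟩
      simp only [At_const]; grind [List.mem_toFinset]
end

section
/- Let α and β be LIF expressions such that β is io-disjoint, i.e., I^sem(β) ∩ O^sem(β) = ∅. Then for every interpretation D, ⟦α ; β⟧_D = cyl^r_{O^sem(β)}(⟦α⟧_D) ∩ cyl^l_{O^sem(α)}(⟦β⟧_D), where cyl^r and cyl^l denote the BRV cylindrification operations. -/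
theorem osem_finite_aux {Name V : Type*} {voc : Vocab Name} (dom : Type*)
    (β : LIF Name V voc) : ∃ S : Set V, S.Finite ∧
      ∀ (D : Interp Name dom) (p : (V → dom) × (V → dom)), p ∈ β.sem D →
        ∀ x, x ∉ S → p.1 x = p.2 x := by
  induction β with
  | idE =>
    refine ⟨∅, Set.finite_empty, ?_⟩
    intro D p hp x _
    have h : p.1 = p.2 := hp
    rw [h]
  | atom M xs ys hx hy =>
    exact ⟨{v | v ∈ ys}, ys.finite_toSet, fun D p hp x hxs => hp.2 x hxs⟩
  | union a b iha ihb =>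
    obtain ⟨S, hS, h1⟩ := iha
    obtain ⟨T, hT, h2⟩ := ihb
    refine ⟨S ∪ T, hS.union hT, ?_⟩
    intro D p hp x hx
    rcases hp with hp | hp
    · exact h1 D p hp x (fun h => hx (Or.inl h))
    · exact h2 D p hp x (fun h => hx (Or.inr h))
  | inter a b iha ihb =>
    obtain ⟨S, hS, h1⟩ := iha
    exact ⟨S, hS, fun D p hp => h1 D p hp.1⟩
  | diff a b iha ihb =>
    obtain ⟨S, hS, h1⟩ := iha
    exact ⟨S, hS, fun D p hp => h1 D p hp.1⟩
  | comp a b iha ihb =>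
    obtain ⟨S, hS, h1⟩ := iha
    obtain ⟨T, hT, h2⟩ := ihb
    refine ⟨S ∪ T, hS.union hT, ?_⟩
    rintro D p ⟨w, ha, hb⟩ x hx
    exact (h1 D _ ha x (fun h => hx (Or.inl h))).trans (h2 D _ hb x (fun h => hx (Or.inr h)))
  | cyll Z a iha =>
    obtain ⟨S, hS, h1⟩ := iha
    refine ⟨S ∪ ↑Z, hS.union Z.finite_toSet, ?_⟩
    rintro D p ⟨w, ha, hb⟩ x hx
    exact (hb x (fun h => hx (Or.inr h))).symm.trans (h1 D _ ha x (fun h => hx (Or.inl h)))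
  | cylr Z a iha =>
    obtain ⟨S, hS, h1⟩ := iha
    refine ⟨S ∪ ↑Z, hS.union Z.finite_toSet, ?_⟩
    rintro D p ⟨w, ha, hb⟩ x hx
    exact (h1 D _ ha x (fun h => hx (Or.inl h))).trans (hb x (fun h => hx (Or.inr h)))
  | sellr y z a iha =>
    obtain ⟨S, hS, h1⟩ := iha
    exact ⟨S, hS, fun D p hp => h1 D p hp.1⟩
  | sell y z a iha =>
    obtain ⟨S, hS, h1⟩ := iha
    exact ⟨S, hS, fun D p hp => h1 D p hp.1⟩
  | selr y z a iha =>
    obtain ⟨S, hS, h1⟩ := iha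
    exact ⟨S, hS, fun D p hp => h1 D p hp.1⟩

theorem osem_finite {Name V : Type*} {voc : Vocab Name} (dom : Type*)
    (β : LIF Name V voc) : (Osem (LIF.gsem dom β)).Finite := by
  obtain ⟨S, hS, h⟩ := osem_finite_aux dom β
  refine hS.subset ?_
  rintro x ⟨D, p, hp, hne⟩
  by_contra hx
  exact hne (h D p hp x hx)

theorem agree_off_osem {V dom I : Type*} (Q : GBRV V dom I) {D : I} {ν1 ν2 : V → dom}
    (h : (ν1, ν2) ∈ Q D) {x : V} (hx : x ∉ Osem Q) : ν1 x = ν2 x := by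
  by_contra hne
  exact hx ⟨D, (ν1, ν2), h, hne⟩

theorem determines_compl {V dom I : Type*} (Q : GBRV V dom I) {S : Set V} (hS : S.Finite)
    (h : ∀ x ∈ S, Determines Q {x}ᶜ (Osem Q)) : Determines Q Sᶜ (Osem Q) := by
  classical
  induction S, hS using Set.Finite.induction_on with
  | empty =>
    intro D p hp ν hν
    have : ν = p.1 := funext fun x => hν x (by simp)
    exact ⟨p.2, fun _ _ => rfl, by rw [this]; exact hp⟩
  | @insert x S hxS hS ih =>
    intro D p hp ν hν
    obtain ⟨w, hw, hwQ⟩ := ih (fun y hy => h y (Or.inr hy)) D p hp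
      (Function.update ν x (p.1 x)) (by
        intro y hy
        by_cases hyx : y = x
        · subst hyx; simp
        · rw [Function.update_of_ne hyx]
          exact hν y (by rintro (h | h); exacts [hyx h, hy h]))
    obtain ⟨w', hw', hwQ'⟩ := h x (Or.inl rfl) D _ hwQ ν (by
      intro y hy
      exact (Function.update_of_ne hy _ _).symm)
    exact ⟨w', fun y hy => (hw' y hy).trans (hw y hy), hwQ'⟩

theorem stmt13 {Name V : Type*} [Nonempty Name] {voc : Vocab Name}
    (dom : Type*) [Countable dom] [Infinite dom]
    (α β : LIF Name V voc)
    (hio : Isem (LIF.gsem dom β) ∩ Osem (LIF.gsem dom β) = ∅) :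
    ∀ D : Interp Name dom,
      (LIF.comp α β).sem D =
        BRV.cylr (Osem (LIF.gsem dom β)) (α.sem D) ∩
        BRV.cyll (Osem (LIF.gsem dom α)) (β.sem D) := by
  intro D
  ext ⟨ν1, ν2⟩
  constructor
  · rintro ⟨ν3, ha, hb⟩
    exact ⟨⟨ν3, ha, fun x hx => agree_off_osem (LIF.gsem dom β) hb hx⟩,
      ⟨ν3, hb, fun x hx => (agree_off_osem (LIF.gsem dom α) ha hx).symm⟩⟩
  · rintro ⟨⟨μ, ha, hμ⟩, ⟨μ', hb, _⟩⟩
    have hdet := determines_compl (LIF.gsem dom β) (osem_finite dom β) (by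
      intro x hx
      by_contra hn
      have : x ∈ Isem (LIF.gsem dom β) ∩ Osem (LIF.gsem dom β) := ⟨hn, hx⟩
      rw [hio] at this
      exact this)
    obtain ⟨w, hw, hwQ⟩ := hdet D (μ', ν2) hb μ (fun x hx =>
      (hμ x hx).trans (agree_off_osem (LIF.gsem dom β) hb hx).symm)
    have : w = ν2 := by
      funext x
      by_cases hx : x ∈ Osem (LIF.gsem dom β)
      · exact hw x hx
      · exact (agree_off_osem (LIF.gsem dom β) hwQ hx).symm.trans (hμ x hx)
    subst this
    exact ⟨μ, ha, hwQ⟩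
end

section
/- Let x̄ = (x1,…,xk) and ȳ = (y1,…,yk) be disjoint tuples of distinct variables of the same length. Then for every BRV B: mvr_{x̄→ȳ}(B) = σ^lr_{x1=x1}(… σ^lr_{xk=xk}(cyl^r_{X}(σ^r_{x1=y1}(… σ^r_{xk=yk}(cyl^r_{Y}(B)) …))) …), where X and Y are the sets of variables occurring in x̄ and ȳ respectively; i.e., the right move equals the result of applying right cylindrification on Y, then the right selections σ^r_{xi=yi} for i = 1,…,k, then right cylindrification on X, then the left-to-right selections σ^lr_{xi=xi} for i = 1,…,k. -/
/-- The right move operation `mvr_{x̄→ȳ}`. -/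
def mvr {V dom : Type*} {k : ℕ} (xs ys : Fin k → V) (B : BRV V dom) : BRV V dom :=
  {p | (∀ i, p.2 (xs i) = p.1 (xs i)) ∧
       ∃ ν2, (p.1, ν2) ∈ B ∧ (∀ i, p.2 (ys i) = ν2 (xs i)) ∧
         BRV.AgreeOn ν2 p.2 (Set.range xs ∪ Set.range ys)ᶜ}

theorem mem_foldr_sellr_aux {V dom : Type*} {k : ℕ} (xs : Fin k → V) (A : BRV V dom)
    (l : List (Fin k)) (p : (V → dom) × (V → dom)) :
    p ∈ l.foldr (fun i acc => BRV.sellr (xs i) (xs i) acc) A ↔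
      p ∈ A ∧ ∀ i ∈ l, p.1 (xs i) = p.2 (xs i) := by
  induction l with
  | nil => simp
  | cons a l ih =>
    rw [List.foldr_cons, BRV.sellr, Set.mem_setOf_eq, ih, List.forall_mem_cons]
    tauto

theorem mem_foldr_selr_aux {V dom : Type*} {k : ℕ} (xs ys : Fin k → V) (A : BRV V dom)
    (l : List (Fin k)) (p : (V → dom) × (V → dom)) :
    p ∈ l.foldr (fun i acc => BRV.selr (xs i) (ys i) acc) A ↔
      p ∈ A ∧ ∀ i ∈ l, p.2 (xs i) = p.2 (ys i) := by
  induction l with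
  | nil => simp
  | cons a l ih =>
    rw [List.foldr_cons, BRV.selr, Set.mem_setOf_eq, ih, List.forall_mem_cons]
    tauto

theorem stmt15 (V dom : Type*) [Countable dom] [Infinite dom] {k : ℕ}
    (xs ys : Fin k → V)
    (hxinj : Function.Injective xs) (hyinj : Function.Injective ys)
    (hdisj : Disjoint (Set.range xs) (Set.range ys))
    (B : BRV V dom) :
    mvr xs ys B =
      (List.finRange k).foldr (fun i acc => BRV.sellr (xs i) (xs i) acc)
        (BRV.cylr (Set.range xs)
          ((List.finRange k).foldr (fun i acc => BRV.selr (xs i) (ys i) acc)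
            (BRV.cylr (Set.range ys) B))) := by
  classical
  have hxy : ∀ i, xs i ∉ Set.range ys := fun i h =>
    Set.disjoint_left.1 hdisj ⟨i, rfl⟩ h
  have hyx : ∀ i, ys i ∉ Set.range xs := fun i h =>
    Set.disjoint_left.1 hdisj h ⟨i, rfl⟩
  ext ⟨ν1, μ⟩
  rw [mem_foldr_sellr_aux]
  constructor
  · rintro ⟨h1, ν2, hB, h2, h3⟩
    refine ⟨⟨fun v => if v ∈ Set.range xs then ν2 v else μ v, ?_, ?_⟩, fun i _ => (h1 i).symm⟩
    · rw [mem_foldr_selr_aux]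
      refine ⟨⟨ν2, hB, ?_⟩, ?_⟩
      · intro v hv
        by_cases hx : v ∈ Set.range xs
        · exact (if_pos hx).symm
        · exact (h3 v (fun h => h.elim hx hv)).trans (if_neg hx).symm
      · intro i _
        exact (if_pos (Set.mem_range_self i)).trans ((h2 i).symm.trans (if_neg (hyx i)).symm)
    · intro v hv
      exact if_neg hv
  · rintro ⟨⟨ν', h, h3⟩, h1⟩
    rw [mem_foldr_selr_aux] at h
    obtain ⟨⟨ν2, hB, h4⟩, h5⟩ := h
    refine ⟨fun i => (h1 i (List.mem_finRange i)).symm, ν2, hB, ?_, ?_⟩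
    · intro i
      have a := h4 _ (hxy i)
      have b := h5 i (List.mem_finRange i)
      have c := h3 _ (hyx i)
      exact (a.trans (b.trans c)).symm
    · intro v hv
      exact (h4 v (fun h => hv (Or.inr h))).trans (h3 v (fun h => hv (Or.inl h)))
end

section
/- Let A and B be BRVs and let x̄ and ȳ be disjoint tuples of distinct variables of the same length such that A and B are each inertially cylindrified on the set of variables occurring in ȳ. Then A ; B = mvr_{ȳ→x̄}(A ; mvr_{x̄→ȳ}(B)). -/
/-- A BRV is inertially cylindrified on a set `X` of variables. -/
def BRV.InertCyl {V dom : Type*} (B : BRV V dom) (X : Set V) : Prop :=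
  (∀ p ∈ B, ∀ x ∈ X, p.1 x = p.2 x) ∧
  (∀ p ∈ B, ∀ ν' : V → dom, (patch p.1 ν' X, patch p.2 ν' X) ∈ B)

theorem stmt16 (V dom : Type*) [Countable dom] [Infinite dom] {k : ℕ}
    (xs ys : Fin k → V)
    (hxinj : Function.Injective xs) (hyinj : Function.Injective ys)
    (hdisj : Disjoint (Set.range xs) (Set.range ys))
    (A B : BRV V dom)
    (hA : A.InertCyl (Set.range ys)) (hB : B.InertCyl (Set.range ys)) :
    BRV.comp A B = mvr ys xs (BRV.comp A (mvr xs ys B)) := by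
  classical
  have hne : ∀ i j, ys i ≠ xs j := fun i j h =>
    Set.disjoint_left.mp hdisj ⟨j, rfl⟩ ⟨i, h⟩
  ext ⟨a, b⟩
  constructor
  · rintro ⟨c, hac, hcb⟩
    have h1 := hA.1 _ hac
    have h2 := hB.1 _ hcb
    simp only at h1 h2 hac hcb
    let n : V → dom := fun v => if h : ∃ i, ys i = v then b (xs h.choose)
      else if v ∈ Set.range xs then c v else b v
    have ny : ∀ i, n (ys i) = b (xs i) := by
      intro i
      have h : ∃ j, ys j = ys i := ⟨i, rfl⟩
      have e : h.choose = i := hyinj h.choose_spec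
      simp only [n]
      rw [dif_pos h, e]
    have nx : ∀ i, n (xs i) = c (xs i) := by
      intro i
      have h : ¬ ∃ j, ys j = xs i := fun ⟨j, hj⟩ => hne j i hj
      simp only [n]
      rw [dif_neg h, if_pos ⟨i, rfl⟩]
    have no : ∀ v, v ∉ Set.range xs → v ∉ Set.range ys → n v = b v := by
      intro v hx hy
      have h : ¬ ∃ j, ys j = v := hy
      simp only [n]
      rw [dif_neg h, if_neg hx]
    refine ⟨fun i => ?_, n, ⟨c, hac, nx, b, hcb, ny, ?_⟩, fun i => (ny i).symm, ?_⟩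
    · exact ((h1 _ ⟨i, rfl⟩).trans (h2 _ ⟨i, rfl⟩)).symm
    · intro v hv
      exact (no v (fun h => hv (Or.inl h)) (fun h => hv (Or.inr h))).symm
    · intro v hv
      exact no v (fun h => hv (Or.inr h)) (fun h => hv (Or.inl h))
  · rintro ⟨hba, n, ⟨c, hac, hnx, d, hcd, hny, hdn⟩, hbx, hnb⟩
    have h1 := hA.1 _ hac
    have h2 := hB.1 _ hcd
    simp only at h1 h2 hac hcd hba hnx hny hdn hbx hnb
    have e : d = b := by
      funext v
      by_cases hx : v ∈ Set.range xs
      · obtain ⟨i, rfl⟩ := hx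
        rw [hbx, hny]
      · by_cases hy : v ∈ Set.range ys
        · obtain ⟨i, rfl⟩ := hy
          rw [hba, h1 _ ⟨i, rfl⟩, h2 _ ⟨i, rfl⟩]
        · exact (hdn v (fun h => h.elim hx hy)).trans (hnb v (fun h => h.elim hy hx))
    exact ⟨c, hac, e ▸ hcd⟩
end

section
/- If the set V of variables is infinite, then every LIF expression is equivalent to a LIF expression in which the composition operator ; does not occur. -/
/-- The composition operator does not occur in the expression. -/
def LIF.NoComp {Name V : Type*} {voc : Vocab Name} : LIF Name V voc → Prop
  | .idE => True
  | .atom _ _ _ _ _ => True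
  | .union a b => a.NoComp ∧ b.NoComp
  | .inter a b => a.NoComp ∧ b.NoComp
  | .diff a b  => a.NoComp ∧ b.NoComp
  | .comp _ _  => False
  | .cyll _ a  => a.NoComp
  | .cylr _ a  => a.NoComp
  | .sellr _ _ a => a.NoComp
  | .sell _ _ a  => a.NoComp
  | .selr _ _ a  => a.NoComp

section Aux

variable {Name V dom : Type*} {voc : Vocab Name}

/-- Predicates on pairs of valuations expressible (relative to agreement outside a large
finite set) without composition. -/
def Cfree (voc : Vocab Name) (P : Interp Name dom → (V → dom) → (V → dom) → Prop) : Prop :=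
  ∃ F : Finset V, ∀ W : Finset V, F ⊆ W → ∃ β : LIF Name V voc, β.NoComp ∧
    ∀ D a b, (a, b) ∈ β.sem D ↔ (∀ x, x ∉ W → a x = b x) ∧ P D a b

theorem Cfree.congr {P Q : Interp Name dom → (V → dom) → (V → dom) → Prop}
    (h : Cfree voc P) (e : ∀ D a b, P D a b ↔ Q D a b) : Cfree voc Q := by
  have : P = Q := by
    funext D a b
    exact propext (e D a b)
  exact this ▸ h

theorem Cfree.true : Cfree voc (fun (_ : Interp Name dom) (_ _ : V → dom) => True) := by
  refine ⟨∅, fun W _ => ⟨.cyll W .idE, trivial, fun D a b => ?_⟩⟩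
  simp only [LIF.sem, BRV.cyll, BRV.AgreeOn, Set.mem_setOf_eq, and_true]
  constructor
  · rintro ⟨c, rfl, h⟩ x hx
    exact (h x (by simpa using hx)).symm
  · intro h
    exact ⟨b, rfl, fun x hx => (h x (by simpa using hx)).symm⟩

theorem Cfree.and {P Q : Interp Name dom → (V → dom) → (V → dom) → Prop}
    (hP : Cfree voc P) (hQ : Cfree voc Q) : Cfree voc (fun D a b => P D a b ∧ Q D a b) := by
  classical
  obtain ⟨F, hF⟩ := hP
  obtain ⟨G, hG⟩ := hQ
  refine ⟨F ∪ G, fun W hW => ?_⟩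
  obtain ⟨β, h1, h2⟩ := hF W (Finset.union_subset_left hW)
  obtain ⟨γ, h3, h4⟩ := hG W (Finset.union_subset_right hW)
  refine ⟨.inter β γ, ⟨h1, h3⟩, fun D a b => ?_⟩
  simp only [LIF.sem, Set.mem_inter_iff, h2, h4]
  tauto

theorem Cfree.or {P Q : Interp Name dom → (V → dom) → (V → dom) → Prop}
    (hP : Cfree voc P) (hQ : Cfree voc Q) : Cfree voc (fun D a b => P D a b ∨ Q D a b) := by
  classical
  obtain ⟨F, hF⟩ := hP
  obtain ⟨G, hG⟩ := hQ
  refine ⟨F ∪ G, fun W hW => ?_⟩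
  obtain ⟨β, h1, h2⟩ := hF W (Finset.union_subset_left hW)
  obtain ⟨γ, h3, h4⟩ := hG W (Finset.union_subset_right hW)
  refine ⟨.union β γ, ⟨h1, h3⟩, fun D a b => ?_⟩
  simp only [LIF.sem, Set.mem_union, h2, h4]
  tauto

theorem Cfree.diff {P Q : Interp Name dom → (V → dom) → (V → dom) → Prop}
    (hP : Cfree voc P) (hQ : Cfree voc Q) : Cfree voc (fun D a b => P D a b ∧ ¬ Q D a b) := by
  classical
  obtain ⟨F, hF⟩ := hP
  obtain ⟨G, hG⟩ := hQ
  refine ⟨F ∪ G, fun W hW => ?_⟩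
  obtain ⟨β, h1, h2⟩ := hF W (Finset.union_subset_left hW)
  obtain ⟨γ, h3, h4⟩ := hG W (Finset.union_subset_right hW)
  refine ⟨.diff β γ, ⟨h1, h3⟩, fun D a b => ?_⟩
  simp only [LIF.sem, Set.mem_diff, h2, h4]
  tauto

theorem Cfree.eq (s t : V ⊕ V) : Cfree voc
    (fun (_ : Interp Name dom) (a b : V → dom) => Sum.elim a b s = Sum.elim a b t) := by
  obtain ⟨F, hF⟩ := Cfree.true (Name := Name) (V := V) (dom := dom) (voc := voc)
  refine ⟨F, fun W hW => ?_⟩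
  obtain ⟨β, h1, h2⟩ := hF W hW
  rcases s with x | x <;> rcases t with y | y
  · exact ⟨.sell x y β, h1, fun D a b => by simp [LIF.sem, BRV.sell, h2]⟩
  · exact ⟨.sellr x y β, h1, fun D a b => by simp [LIF.sem, BRV.sellr, h2]⟩
  · exact ⟨.sellr y x β, h1, fun D a b => by simp [LIF.sem, BRV.sellr, h2, eq_comm]⟩
  · exact ⟨.selr x y β, h1, fun D a b => by simp [LIF.sem, BRV.selr, h2]⟩

theorem Cfree.mapEq (A B : List (V ⊕ V)) : Cfree voc
    (fun (_ : Interp Name dom) (a b : V → dom) =>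
      A.map (Sum.elim a b) = B.map (Sum.elim a b)) := by
  have hf : Cfree voc (fun (_ : Interp Name dom) (_ _ : V → dom) => False) :=
    (Cfree.true.diff Cfree.true).congr (by simp)
  induction A generalizing B with
  | nil =>
    cases B with
    | nil => exact Cfree.true.congr (by simp)
    | cons t B => exact hf.congr (by simp)
  | cons s A ih =>
    cases B with
    | nil => exact hf.congr (by simp)
    | cons t B => exact ((Cfree.eq s t).and (ih B)).congr (by simp)

theorem Cfree.ballEq (p : V → Prop) (f g : V → V ⊕ V) (W : Finset V) : Cfree voc
    (fun (_ : Interp Name dom) (a b : V → dom) =>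
      ∀ v ∈ W, p v → Sum.elim a b (f v) = Sum.elim a b (g v)) := by
  classical
  induction W using Finset.induction_on with
  | empty => exact Cfree.true.congr (by simp)
  | insert v W _ ih =>
    by_cases hp : p v
    · exact ((Cfree.eq (f v) (g v)).and ih).congr (by simp [hp])
    · exact ih.congr (by simp [hp])

theorem Cfree.exl {P : Interp Name dom → (V → dom) → (V → dom) → Prop}
    (hP : Cfree voc P) (Z : Finset V) :
    Cfree voc (fun D a b => ∃ a', (∀ x, x ∉ Z → a' x = a x) ∧ P D a' b) := by
  classical
  obtain ⟨F, hF⟩ := hP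
  refine ⟨F ∪ Z, fun W hW => ?_⟩
  obtain ⟨β, h1, h2⟩ := hF W (Finset.union_subset_left hW)
  have hZ := Finset.union_subset_right hW
  refine ⟨.cyll Z β, h1, fun D a b => ?_⟩
  simp only [LIF.sem, BRV.cyll, BRV.AgreeOn, Set.mem_setOf_eq, h2, Set.mem_compl_iff,
    Finset.mem_coe]
  constructor
  · rintro ⟨a', ⟨h, h'⟩, h3⟩
    exact ⟨fun x hx => (h3 x fun hz => hx (hZ hz)) ▸ h x hx, a', h3, h'⟩
  · rintro ⟨h, a', h3, h'⟩
    exact ⟨a', ⟨fun x hx => (h3 x fun hz => hx (hZ hz)).trans (h x hx), h'⟩, h3⟩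

theorem Cfree.exr {P : Interp Name dom → (V → dom) → (V → dom) → Prop}
    (hP : Cfree voc P) (Z : Finset V) :
    Cfree voc (fun D a b => ∃ b', (∀ x, x ∉ Z → b' x = b x) ∧ P D a b') := by
  classical
  obtain ⟨F, hF⟩ := hP
  refine ⟨F ∪ Z, fun W hW => ?_⟩
  obtain ⟨β, h1, h2⟩ := hF W (Finset.union_subset_left hW)
  have hZ := Finset.union_subset_right hW
  refine ⟨.cylr Z β, h1, fun D a b => ?_⟩
  simp only [LIF.sem, BRV.cylr, BRV.AgreeOn, Set.mem_setOf_eq, h2, Set.mem_compl_iff,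
    Finset.mem_coe]
  constructor
  · rintro ⟨b', ⟨h, h'⟩, h3⟩
    exact ⟨fun x hx => (h x hx).trans (h3 x fun hz => hx (hZ hz)), b', h3, h'⟩
  · rintro ⟨h, b', h3, h'⟩
    exact ⟨b', ⟨fun x hx => (h x hx).trans (h3 x fun hz => hx (hZ hz)).symm, h'⟩, h3⟩

theorem exists_fresh [Infinite V] (F W : Finset V) :
    ∃ e : V → V, (∀ v ∈ W, e v ∉ F) ∧ ∀ v ∈ W, ∀ w ∈ W, e v = e w → v = w := by
  classical
  obtain ⟨T, hT, hc⟩ := (F.finite_toSet.infinite_compl).exists_subset_card_eq W.card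
  let E := Finset.equivOfCardEq hc.symm
  refine ⟨fun v => if h : v ∈ W then (E ⟨v, h⟩ : V) else v, fun v hv => ?_, fun v hv w hw => ?_⟩
  · simp only [hv, dif_pos]
    have := hT (E ⟨v, hv⟩).2
    simpa using this
  · simp only [hv, hw, dif_pos]
    intro h
    simpa using E.injective (Subtype.ext h)

theorem exists_map_eq (us : List V) (hn : us.Nodup) (l : List dom) (hl : us.length = l.length)
    (a : V → dom) : ∃ a', (∀ x, x ∉ us → a' x = a x) ∧ us.map a' = l := by
  classical
  induction us generalizing l with
  | nil =>
    cases l with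
    | nil => exact ⟨a, by simp, rfl⟩
    | cons => simp at hl
  | cons u us ih =>
    cases l with
    | nil => simp at hl
    | cons d l =>
      rw [List.nodup_cons] at hn
      obtain ⟨a', h1, h2⟩ := ih hn.2 l (by simpa using hl)
      refine ⟨Function.update a' u d, fun x hx => ?_, ?_⟩
      · simp only [List.mem_cons, not_or] at hx
        rw [Function.update_of_ne hx.1, h1 x hx.2]
      · rw [List.map_cons, Function.update_self, ← h2]
        congr 1
        apply List.map_congr_left
        intro x hx
        exact Function.update_of_ne (by rintro rfl; exact hn.1 hx) _ _

theorem exists_fresh_list [Infinite V] (F : Finset V) (n : ℕ) :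
    ∃ us : List V, us.Nodup ∧ us.length = n ∧ ∀ u ∈ us, u ∉ F := by
  classical
  obtain ⟨T, hT, hc⟩ := (F.finite_toSet.infinite_compl).exists_subset_card_eq n
  refine ⟨T.toList, T.nodup_toList, by simpa using hc, fun u hu => ?_⟩
  have := hT (Finset.mem_coe.2 (Finset.mem_toList.1 hu))
  simpa using this

/-- variable underlying a term -/
def tvar : V ⊕ V → V := Sum.elim id id

theorem elim_congr {a a' b b' : V → dom} (t : V ⊕ V) (ha : a' (tvar t) = a (tvar t))
    (hb : b' (tvar t) = b (tvar t)) : Sum.elim a' b' t = Sum.elim a b t := by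
  cases t <;> simpa [tvar] using by assumption

theorem Cfree.atomBase (M : Name) (us vs : List V) (hu : us.length = voc.iar M)
    (hv : vs.length = voc.ar M - voc.iar M) (hd : ∀ u ∈ us, u ∉ vs) : Cfree voc
    (fun (D : Interp Name dom) (a b : V → dom) =>
      (us.map a ++ vs.map b) ∈ D M ∧ ∀ u ∈ us, a u = b u) := by
  classical
  refine ⟨us.toFinset ∪ vs.toFinset, fun W hW =>
    ⟨.cyll (W \ us.toFinset) (.atom M us vs hu hv), trivial, fun D a b => ?_⟩⟩
  have hvW : ∀ v ∈ vs, v ∈ W := fun v h => hW (by simp [h])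
  simp only [LIF.sem, BRV.cyll, BRV.AgreeOn, Set.mem_setOf_eq, Set.mem_compl_iff,
    Finset.mem_coe, Finset.mem_sdiff, List.mem_toFinset, not_and, not_not]
  constructor
  · rintro ⟨a', ⟨h1, h2⟩, h3⟩
    have h4 : ∀ u ∈ us, a' u = a u := fun u hu => h3 u fun _ => hu
    refine ⟨fun x hx => ?_, ?_, fun u hu => ?_⟩
    · rw [← h3 x (fun h => absurd h hx), h2 x (fun h => hx (hvW x h))]
    · rwa [← List.map_congr_left h4]
    · rw [← h4 u hu, h2 u (hd u hu)]
  · rintro ⟨h1, h2, h3⟩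
    refine ⟨b, ⟨?_, fun _ _ => rfl⟩, fun x hx => ?_⟩
    · rwa [← List.map_congr_left h3]
    · by_cases h : x ∈ W
      · exact (h3 x (hx h)).symm
      · exact (h1 x h).symm

theorem Cfree.atom [Infinite V] (M : Name) (ts ss : List (V ⊕ V)) (ht : ts.length = voc.iar M)
    (hs : ss.length = voc.ar M - voc.iar M) : Cfree voc
    (fun (D : Interp Name dom) (a b : V → dom) =>
      (ts.map (Sum.elim a b) ++ ss.map (Sum.elim a b)) ∈ D M) := by
  classical
  let F : Finset V := ((ts ++ ss).map tvar).toFinset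
  obtain ⟨us, hu1, hu2, hu3⟩ := exists_fresh_list F ts.length
  obtain ⟨vs, hv1, hv2, hv3⟩ := exists_fresh_list (F ∪ us.toFinset) ss.length
  have huv : ∀ u ∈ us, u ∉ vs := fun u hu hv => hv3 u hv (by simp [hu])
  have hnF : ∀ t, (t ∈ ts ∨ t ∈ ss) → tvar t ∉ us ++ vs := by
    intro t ht h
    have : tvar t ∈ F := by
      simp only [F, List.mem_toFinset, List.mem_map, List.mem_append]
      exact ⟨t, ht, rfl⟩
    rcases List.mem_append.1 h with h | h
    · exact hu3 _ h this
    · exact hv3 _ h (by simp [this])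
  have key := ((((Cfree.atomBase (dom := dom) (voc := voc) M us vs (hu2.trans ht) (hv2.trans hs) huv).and
    (Cfree.mapEq (us.map Sum.inl) ts)).and (Cfree.mapEq (vs.map Sum.inr) ss)).exr
      (us ++ vs).toFinset).exl (us ++ vs).toFinset
  refine key.congr fun D a b => ?_
  simp only [List.mem_toFinset, List.map_map, Sum.elim_comp_inl, Sum.elim_comp_inr]
  constructor
  · rintro ⟨a', ha, b', hb, ⟨⟨h1, h2⟩, h3⟩, h4⟩
    have e : ∀ t, (t ∈ ts ∨ t ∈ ss) → Sum.elim a' b' t = Sum.elim a b t := fun t ht =>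
      elim_congr t (ha _ (hnF t ht)) (hb _ (hnF t ht))
    rw [h3, h4, List.map_congr_left fun t ht => e t (Or.inl ht),
      List.map_congr_left fun t ht => e t (Or.inr ht)] at h1
    exact h1
  · intro h
    obtain ⟨a', ha, ha'⟩ := exists_map_eq us hu1 (ts.map (Sum.elim a b)) (by simp [hu2]) a
    obtain ⟨b', hb, hb'⟩ := exists_map_eq (us ++ vs)
      (List.nodup_append.2 ⟨hu1, hv1, fun u hu v hv e => huv u hu (e ▸ hv)⟩)
      (ts.map (Sum.elim a b) ++ ss.map (Sum.elim a b)) (by simp [hu2, hv2]) b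
    have ha2 : ∀ x, x ∉ us ++ vs → a' x = a x := fun x hx =>
      ha x fun h => hx (List.mem_append_left _ h)
    rw [List.map_append] at hb'
    obtain ⟨hb1, hb2⟩ := List.append_inj hb' (by simp [hu2])
    have e : ∀ t, (t ∈ ts ∨ t ∈ ss) → Sum.elim a' b' t = Sum.elim a b t := fun t ht =>
      elim_congr t (ha2 _ (hnF t ht)) (hb _ (hnF t ht))
    refine ⟨a', ha2, b', hb, ⟨⟨?_, ?_⟩, ?_⟩, ?_⟩
    · rwa [ha', hb2]
    · have := ha'.trans hb1.symm
      exact List.map_inj_left.1 this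
    · rw [ha', List.map_congr_left fun t ht => e t (Or.inl ht)]
    · rw [hb2, List.map_congr_left fun t ht => e t (Or.inr ht)]

/-- Existential quantification over a valuation restricted to `W`. -/
theorem Cfree.exVal [Infinite V] (W : Finset V)
    (Φ : Interp Name dom → (V → dom) → (V → dom) → (V → dom) → Prop)
    (loc : ∀ D a a' b b' c c', (∀ v ∈ W, a v = a' v) → (∀ v ∈ W, b v = b' v) →
      (∀ v ∈ W, c v = c' v) → Φ D a b c → Φ D a' b' c')
    (h : ∀ f g k : V → V ⊕ V, Cfree voc
      (fun D a b => Φ D (Sum.elim a b ∘ f) (Sum.elim a b ∘ g) (Sum.elim a b ∘ k)))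
    (f g : V → V ⊕ V) :
    Cfree voc (fun D a b => ∃ c, Φ D (Sum.elim a b ∘ f) (Sum.elim a b ∘ g) c) := by
  classical
  obtain ⟨e, he1, he2⟩ := exists_fresh (W.image (tvar ∘ f) ∪ W.image (tvar ∘ g)) W
  refine ((h f g (fun v => Sum.inl (e v))).exl (W.image e)).congr fun D a b => ?_
  have hf : ∀ a', (∀ x, x ∉ W.image e → a' x = a x) → ∀ v ∈ W,
      (Sum.elim a' b ∘ f) v = (Sum.elim a b ∘ f) v := by
    intro a' ha v hv
    refine elim_congr _ (ha _ fun hm => ?_) rfl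
    obtain ⟨w, hw, hwe⟩ := Finset.mem_image.1 hm
    exact he1 w hw (Finset.mem_union_left _ (Finset.mem_image.2 ⟨v, hv, hwe.symm⟩))
  have hg : ∀ a', (∀ x, x ∉ W.image e → a' x = a x) → ∀ v ∈ W,
      (Sum.elim a' b ∘ g) v = (Sum.elim a b ∘ g) v := by
    intro a' ha v hv
    refine elim_congr _ (ha _ fun hm => ?_) rfl
    obtain ⟨w, hw, hwe⟩ := Finset.mem_image.1 hm
    exact he1 w hw (Finset.mem_union_right _ (Finset.mem_image.2 ⟨v, hv, hwe.symm⟩))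
  constructor
  · rintro ⟨a', ha, h'⟩
    exact ⟨_, loc D _ _ _ _ _ _ (hf a' ha) (hg a' ha) (fun _ _ => rfl) h'⟩
  · rintro ⟨c, hc⟩
    let a' : V → dom := fun x => if hx : ∃ w ∈ W, e w = x then c hx.choose else a x
    have ha : ∀ x, x ∉ W.image e → a' x = a x := by
      intro x hx
      simp only [a']
      rw [dif_neg]
      rintro ⟨w, hw, rfl⟩
      exact hx (Finset.mem_image_of_mem _ hw)
    refine ⟨a', ha, loc D _ _ _ _ _ _ (fun v hv => (hf a' ha v hv).symm)
      (fun v hv => (hg a' ha v hv).symm) (fun v hv => ?_) hc⟩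
    have hx : ∃ w ∈ W, e w = e v := ⟨v, hv, rfl⟩
    have : hx.choose = v := he2 _ hx.choose_spec.1 _ hv hx.choose_spec.2
    simp only [Function.comp, Sum.elim_inl, a']
    rw [dif_pos hx, this]

open Classical in
/-- The variables of an expression. -/
noncomputable def lvars : LIF Name V voc → Finset V
  | .idE => ∅
  | .atom _ xs ys _ _ => xs.toFinset ∪ ys.toFinset
  | .union a b => lvars a ∪ lvars b
  | .inter a b => lvars a ∪ lvars b
  | .diff a b => lvars a ∪ lvars b
  | .comp a b => lvars a ∪ lvars b
  | .cyll Z a => Z ∪ lvars a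
  | .cylr Z a => Z ∪ lvars a
  | .sellr x y a => {x, y} ∪ lvars a
  | .sell x y a => {x, y} ∪ lvars a
  | .selr x y a => {x, y} ∪ lvars a

/-- Semantics restricted to a finite set `W` of variables. -/
def semW (W : Finset V) (D : Interp Name dom) : LIF Name V voc → (V → dom) → (V → dom) → Prop
  | .idE, a, b => ∀ v ∈ W, a v = b v
  | .atom M xs ys _ _, a, b =>
      (xs.map a ++ ys.map b) ∈ D M ∧ ∀ v ∈ W, v ∉ ys → a v = b v
  | .union α β, a, b => semW W D α a b ∨ semW W D β a b
  | .inter α β, a, b => semW W D α a b ∧ semW W D β a b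
  | .diff α β, a, b => semW W D α a b ∧ ¬ semW W D β a b
  | .comp α β, a, b => ∃ c, semW W D α a c ∧ semW W D β c b
  | .cyll Z α, a, b => ∃ c, semW W D α c b ∧ ∀ v ∈ W, v ∉ Z → c v = a v
  | .cylr Z α, a, b => ∃ c, semW W D α a c ∧ ∀ v ∈ W, v ∉ Z → c v = b v
  | .sellr x y α, a, b => semW W D α a b ∧ a x = b y
  | .sell x y α, a, b => semW W D α a b ∧ a x = a y
  | .selr x y α, a, b => semW W D α a b ∧ b x = b y

theorem semW_loc (W : Finset V) (D : Interp Name dom) (α : LIF Name V voc) (hα : lvars α ⊆ W)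
    (a a' b b' : V → dom) (ha : ∀ v ∈ W, a v = a' v) (hb : ∀ v ∈ W, b v = b' v) :
    semW W D α a b ↔ semW W D α a' b' := by
  classical
  induction α generalizing a a' b b' with
  | idE =>
    simp only [semW]
    exact forall₂_congr fun v hv => by rw [ha v hv, hb v hv]
  | atom M xs ys hx hy =>
    simp only [lvars, Finset.union_subset_iff] at hα
    simp only [semW]
    rw [List.map_congr_left (l := xs) fun v hv => ha v (hα.1 (by simp [hv])),
      List.map_congr_left (l := ys) fun v hv => hb v (hα.2 (by simp [hv]))]
    exact and_congr Iff.rfl (forall₂_congr fun v hv => by rw [ha v hv, hb v hv])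
  | union α β ih1 ih2 =>
    simp only [lvars, Finset.union_subset_iff] at hα
    simp only [semW]
    rw [ih1 hα.1 a a' b b' ha hb, ih2 hα.2 a a' b b' ha hb]
  | inter α β ih1 ih2 =>
    simp only [lvars, Finset.union_subset_iff] at hα
    simp only [semW]
    rw [ih1 hα.1 a a' b b' ha hb, ih2 hα.2 a a' b b' ha hb]
  | diff α β ih1 ih2 =>
    simp only [lvars, Finset.union_subset_iff] at hα
    simp only [semW]
    rw [ih1 hα.1 a a' b b' ha hb, ih2 hα.2 a a' b b' ha hb]
  | comp α β ih1 ih2 =>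
    simp only [lvars, Finset.union_subset_iff] at hα
    simp only [semW]
    exact exists_congr fun c => by
      rw [ih1 hα.1 a a' c c ha (fun _ _ => rfl), ih2 hα.2 c c b b' (fun _ _ => rfl) hb]
  | cyll Z α ih =>
    simp only [lvars, Finset.union_subset_iff] at hα
    simp only [semW]
    exact exists_congr fun c => and_congr (ih hα.2 c c b b' (fun _ _ => rfl) hb)
      (forall₂_congr fun v hv => by rw [ha v hv])
  | cylr Z α ih =>
    simp only [lvars, Finset.union_subset_iff] at hα
    simp only [semW]
    exact exists_congr fun c => and_congr (ih hα.2 a a' c c ha (fun _ _ => rfl))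
      (forall₂_congr fun v hv => by rw [hb v hv])
  | sellr x y α ih =>
    simp only [lvars, Finset.union_subset_iff] at hα
    simp only [semW]
    rw [ih hα.2 a a' b b' ha hb, ha x (hα.1 (by simp)), hb y (hα.1 (by simp))]
  | sell x y α ih =>
    simp only [lvars, Finset.union_subset_iff] at hα
    simp only [semW]
    rw [ih hα.2 a a' b b' ha hb, ha x (hα.1 (by simp)), ha y (hα.1 (by simp))]
  | selr x y α ih =>
    simp only [lvars, Finset.union_subset_iff] at hα
    simp only [semW]
    rw [ih hα.2 a a' b b' ha hb, hb x (hα.1 (by simp)), hb y (hα.1 (by simp))]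

theorem sem_iff (W : Finset V) (D : Interp Name dom) (α : LIF Name V voc) (hα : lvars α ⊆ W)
    (a b : V → dom) :
    (a, b) ∈ α.sem D ↔ (∀ x, x ∉ W → a x = b x) ∧ semW W D α a b := by
  classical
  induction α generalizing a b with
  | idE =>
    simp only [LIF.sem, semW, Set.mem_setOf_eq, funext_iff]
    constructor
    · exact fun h => ⟨fun x _ => h x, fun x _ => h x⟩
    · rintro ⟨h1, h2⟩ x
      by_cases hx : x ∈ W
      · exact h2 x hx
      · exact h1 x hx
  | atom M xs ys hx hy =>
    simp only [lvars, Finset.union_subset_iff] at hα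
    simp only [LIF.sem, semW, Set.mem_setOf_eq, BRV.AgreeOn, Set.mem_compl_iff]
    constructor
    · rintro ⟨h1, h2⟩
      exact ⟨fun x hx => h2 x fun h => hx (hα.2 (by simp [h])), h1, fun v _ hv => h2 v hv⟩
    · rintro ⟨h1, h2, h3⟩
      refine ⟨h2, fun x hx => ?_⟩
      by_cases hW : x ∈ W
      · exact h3 x hW hx
      · exact h1 x hW
  | union α β ih1 ih2 =>
    simp only [lvars, Finset.union_subset_iff] at hα
    simp only [LIF.sem, semW, Set.mem_union, ih1 hα.1, ih2 hα.2]
    tauto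
  | inter α β ih1 ih2 =>
    simp only [lvars, Finset.union_subset_iff] at hα
    simp only [LIF.sem, semW, Set.mem_inter_iff, ih1 hα.1, ih2 hα.2]
    tauto
  | diff α β ih1 ih2 =>
    simp only [lvars, Finset.union_subset_iff] at hα
    simp only [LIF.sem, semW, Set.mem_diff, ih1 hα.1, ih2 hα.2]
    tauto
  | comp α β ih1 ih2 =>
    simp only [lvars, Finset.union_subset_iff] at hα
    simp only [LIF.sem, semW, BRV.comp, Set.mem_setOf_eq, ih1 hα.1, ih2 hα.2]
    constructor
    · rintro ⟨c, ⟨h1, h2⟩, h3, h4⟩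
      exact ⟨fun x hx => (h1 x hx).trans (h3 x hx), c, h2, h4⟩
    · rintro ⟨h, c, h2, h4⟩
      have hc : ∀ v ∈ W, c v = (fun v => if v ∈ W then c v else a v) v := fun v hv => by
        simp [hv]
      refine ⟨fun v => if v ∈ W then c v else a v, ⟨fun x hx => by simp [hx], ?_⟩,
        fun x hx => by simp [hx, h x hx], ?_⟩
      · exact (semW_loc W D α hα.1 a a _ _ (fun _ _ => rfl) hc).1 h2
      · exact (semW_loc W D β hα.2 _ _ b b hc (fun _ _ => rfl)).1 h4
  | cyll Z α ih =>
    simp only [lvars, Finset.union_subset_iff] at hα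
    simp only [LIF.sem, semW, BRV.cyll, BRV.AgreeOn, Set.mem_setOf_eq, ih hα.2,
      Set.mem_compl_iff, Finset.mem_coe]
    constructor
    · rintro ⟨c, ⟨h1, h2⟩, h3⟩
      exact ⟨fun x hx => (h3 x fun hz => hx (hα.1 hz)) ▸ h1 x hx, c, h2, fun v _ hv => h3 v hv⟩
    · rintro ⟨h, c, h2, h4⟩
      have hc : ∀ v ∈ W, c v = (fun v => if v ∈ W then c v else a v) v := fun v hv => by
        simp [hv]
      refine ⟨fun v => if v ∈ W then c v else a v, ⟨fun x hx => by simp [hx, h x hx], ?_⟩,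
        fun x hx => ?_⟩
      · exact (semW_loc W D α hα.2 _ _ b b hc (fun _ _ => rfl)).1 h2
      · by_cases hW : x ∈ W
        · simp [hW, h4 x hW hx]
        · simp [hW]
  | cylr Z α ih =>
    simp only [lvars, Finset.union_subset_iff] at hα
    simp only [LIF.sem, semW, BRV.cylr, BRV.AgreeOn, Set.mem_setOf_eq, ih hα.2,
      Set.mem_compl_iff, Finset.mem_coe]
    constructor
    · rintro ⟨c, ⟨h1, h2⟩, h3⟩
      exact ⟨fun x hx => (h1 x hx).trans (h3 x fun hz => hx (hα.1 hz)), c, h2,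
        fun v _ hv => h3 v hv⟩
    · rintro ⟨h, c, h2, h4⟩
      have hc : ∀ v ∈ W, c v = (fun v => if v ∈ W then c v else b v) v := fun v hv => by
        simp [hv]
      refine ⟨fun v => if v ∈ W then c v else b v, ⟨fun x hx => by simp [hx, h x hx], ?_⟩,
        fun x hx => ?_⟩
      · exact (semW_loc W D α hα.2 a a _ _ (fun _ _ => rfl) hc).1 h2
      · by_cases hW : x ∈ W
        · simp [hW, h4 x hW hx]
        · simp [hW]
  | sellr x y α ih =>
    simp only [lvars, Finset.union_subset_iff] at hα
    simp only [LIF.sem, semW, BRV.sellr, Set.mem_setOf_eq, ih hα.2, and_assoc]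
  | sell x y α ih =>
    simp only [lvars, Finset.union_subset_iff] at hα
    simp only [LIF.sem, semW, BRV.sell, Set.mem_setOf_eq, ih hα.2, and_assoc]
  | selr x y α ih =>
    simp only [lvars, Finset.union_subset_iff] at hα
    simp only [LIF.sem, semW, BRV.selr, Set.mem_setOf_eq, ih hα.2, and_assoc]

theorem semW_cfree [Infinite V] (W : Finset V) (α : LIF Name V voc) (hα : lvars α ⊆ W)
    (f g : V → V ⊕ V) : Cfree voc (fun (D : Interp Name dom) a b =>
      semW W D α (Sum.elim a b ∘ f) (Sum.elim a b ∘ g)) := by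
  classical
  induction α generalizing f g with
  | idE => exact (Cfree.ballEq (fun _ => True) f g W).congr (by simp [semW])
  | atom M xs ys hx hy =>
    exact ((Cfree.atom M (xs.map f) (ys.map g) (by simpa using hx) (by simpa using hy)).and
      (Cfree.ballEq (fun v => v ∉ ys) f g W)).congr (by simp [semW])
  | union α β ih1 ih2 =>
    simp only [lvars, Finset.union_subset_iff] at hα
    exact (ih1 hα.1 f g).or (ih2 hα.2 f g)
  | inter α β ih1 ih2 =>
    simp only [lvars, Finset.union_subset_iff] at hα
    exact (ih1 hα.1 f g).and (ih2 hα.2 f g)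
  | diff α β ih1 ih2 =>
    simp only [lvars, Finset.union_subset_iff] at hα
    exact (ih1 hα.1 f g).diff (ih2 hα.2 f g)
  | comp α β ih1 ih2 =>
    simp only [lvars, Finset.union_subset_iff] at hα
    refine Cfree.exVal W (fun D a b c => semW W D α a c ∧ semW W D β c b) ?_ ?_ f g
    · rintro D a a' b b' c c' ha hb hc ⟨h1, h2⟩
      exact ⟨(semW_loc W D α hα.1 _ _ _ _ ha hc).1 h1, (semW_loc W D β hα.2 _ _ _ _ hc hb).1 h2⟩
    · exact fun f g k => (ih1 hα.1 f k).and (ih2 hα.2 k g)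
  | cyll Z α ih =>
    simp only [lvars, Finset.union_subset_iff] at hα
    refine Cfree.exVal W
      (fun D a b c => semW W D α c b ∧ ∀ v ∈ W, v ∉ Z → c v = a v) ?_ ?_ f g
    · rintro D a a' b b' c c' ha hb hc ⟨h1, h2⟩
      exact ⟨(semW_loc W D α hα.2 _ _ _ _ hc hb).1 h1,
        fun v hv hz => by rw [← ha v hv, ← hc v hv, h2 v hv hz]⟩
    · exact fun f g k => (ih hα.2 k g).and (Cfree.ballEq (fun v => v ∉ Z) k f W)
  | cylr Z α ih =>
    simp only [lvars, Finset.union_subset_iff] at hα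
    refine Cfree.exVal W
      (fun D a b c => semW W D α a c ∧ ∀ v ∈ W, v ∉ Z → c v = b v) ?_ ?_ f g
    · rintro D a a' b b' c c' ha hb hc ⟨h1, h2⟩
      exact ⟨(semW_loc W D α hα.2 _ _ _ _ ha hc).1 h1,
        fun v hv hz => by rw [← hb v hv, ← hc v hv, h2 v hv hz]⟩
    · exact fun f g k => (ih hα.2 f k).and (Cfree.ballEq (fun v => v ∉ Z) k g W)
  | sellr x y α ih =>
    simp only [lvars, Finset.union_subset_iff] at hα
    exact (ih hα.2 f g).and (Cfree.eq (f x) (g y))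
  | sell x y α ih =>
    simp only [lvars, Finset.union_subset_iff] at hα
    exact (ih hα.2 f g).and (Cfree.eq (f x) (f y))
  | selr x y α ih =>
    simp only [lvars, Finset.union_subset_iff] at hα
    exact (ih hα.2 f g).and (Cfree.eq (g x) (g y))

end Aux

theorem stmt17 {Name V : Type*} [Nonempty Name] {voc : Vocab Name} [Infinite V]
    (dom : Type*) [Countable dom] [Infinite dom]
    (α : LIF Name V voc) :
    ∃ β : LIF Name V voc, β.NoComp ∧ ∀ D : Interp Name dom, α.sem D = β.sem D := by
  classical
  obtain ⟨F, hF⟩ := semW_cfree (dom := dom) (lvars α) α (Finset.Subset.refl _) Sum.inl Sum.inr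
  obtain ⟨β, h1, h2⟩ := hF (F ∪ lvars α) Finset.subset_union_left
  refine ⟨.inter (.cyll (lvars α) .idE) β, ⟨trivial, h1⟩, fun D => ?_⟩
  ext ⟨a, b⟩
  rw [sem_iff (lvars α) D α (Finset.Subset.refl _)]
  simp only [LIF.sem, Set.mem_inter_iff, h2, BRV.cyll, BRV.AgreeOn, Set.mem_setOf_eq,
    Set.mem_compl_iff, Finset.mem_coe, Sum.elim_comp_inl, Sum.elim_comp_inr]
  constructor
  · rintro ⟨h, h'⟩
    exact ⟨⟨b, rfl, fun x hx => (h x hx).symm⟩,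
      fun x hx => h x fun hm => hx (Finset.mem_union_right _ hm), h'⟩
  · rintro ⟨⟨c, rfl, h⟩, _, h'⟩
    exact ⟨fun x hx => (h x hx).symm, h'⟩
end

section
/- Suppose the set of variables V = {x1,…,xn} is finite with n ≥ 2, and the module vocabulary consists of a single module name R with ar(R) = iar(R) = 2. Then there exists a LIF expression α_{2n} such that for every interpretation D, ⟦α_{2n}⟧_D = {(ν1,ν2) : ν1(V) ∪ ν2(V) is a 2n-clique in D(R)}, where ν(V) denotes the image of V under the valuation ν. -/
/-- `L` is a `k`-clique in the binary relation `R` (represented as a set of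
two-element lists): `L` has exactly `k` elements and all distinct `a, b ∈ L`
are related. -/
def IsKClique {dom : Type*} (R : Set (List dom)) (L : Set dom) (k : ℕ) : Prop :=
  L.ncard = k ∧ ∀ a ∈ L, ∀ b ∈ L, a ≠ b → [a, b] ∈ R

/-- A property of pairs of valuations is definable by a LIF expression. -/
def LifDef {V dom : Type*} (voc : Vocab Unit)
    (P : Interp Unit dom → (V → dom) → (V → dom) → Prop) : Prop :=
  ∃ α : LIF Unit V voc, ∀ D ν1 ν2, (ν1, ν2) ∈ α.sem D ↔ P D ν1 ν2

namespace LifDef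

variable {V dom : Type*} [Fintype V] {voc : Vocab Unit}

/-- The full relation. -/
theorem all : LifDef (V := V) (dom := dom) voc (fun _ _ _ => True) := by
  refine ⟨.cyll Finset.univ .idE, fun D ν1 ν2 => ?_⟩
  simp [LIF.sem, BRV.cyll, BRV.AgreeOn]

theorem and {P Q : Interp Unit dom → (V → dom) → (V → dom) → Prop}
    (hP : LifDef voc P) (hQ : LifDef voc Q) :
    LifDef voc (fun D a b => P D a b ∧ Q D a b) := by
  obtain ⟨α, hα⟩ := hP
  obtain ⟨β, hβ⟩ := hQ
  exact ⟨.inter α β, fun D a b => by simp [LIF.sem, hα, hβ]⟩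

theorem not {P : Interp Unit dom → (V → dom) → (V → dom) → Prop}
    (hP : LifDef voc P) : LifDef voc (fun D a b => ¬ P D a b) := by
  obtain ⟨α, hα⟩ := hP
  obtain ⟨β, hβ⟩ := all (V := V) (dom := dom) (voc := voc)
  exact ⟨.diff β α, fun D a b => by simp [LIF.sem, hα, hβ]⟩

theorem comp {P Q : Interp Unit dom → (V → dom) → (V → dom) → Prop}
    (hP : LifDef voc P) (hQ : LifDef voc Q) :
    LifDef voc (fun D a b => ∃ c, P D a c ∧ Q D c b) := by
  obtain ⟨α, hα⟩ := hP
  obtain ⟨β, hβ⟩ := hQ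
  exact ⟨.comp α β, fun D a b => by simp [LIF.sem, BRV.comp, hα, hβ]⟩

theorem eqLR (x y : V) : LifDef (dom := dom) voc (fun _ a b => a x = b y) := by
  obtain ⟨β, hβ⟩ := all (V := V) (dom := dom) (voc := voc)
  exact ⟨.sellr x y β, fun D a b => by simp [LIF.sem, BRV.sellr, hβ]⟩

theorem eqLL (x y : V) : LifDef (dom := dom) voc (fun _ a _ => a x = a y) := by
  obtain ⟨β, hβ⟩ := all (V := V) (dom := dom) (voc := voc)
  exact ⟨.sell x y β, fun D a b => by simp [LIF.sem, BRV.sell, hβ]⟩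

theorem eqRR (x y : V) : LifDef (dom := dom) voc (fun _ _ b => b x = b y) := by
  obtain ⟨β, hβ⟩ := all (V := V) (dom := dom) (voc := voc)
  exact ⟨.selr x y β, fun D a b => by simp [LIF.sem, BRV.selr, hβ]⟩

theorem congr {P Q : Interp Unit dom → (V → dom) → (V → dom) → Prop}
    (hP : LifDef voc P) (h : ∀ D a b, P D a b ↔ Q D a b) : LifDef voc Q := by
  obtain ⟨α, hα⟩ := hP
  exact ⟨α, fun D a b => (hα D a b).trans (h D a b)⟩

theorem atomR (har : voc.ar () = 2) (hiar : voc.iar () = 2) (x y : V) :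
    LifDef (dom := dom) voc (fun D a b => [a x, a y] ∈ D () ∧ a = b) := by
  refine ⟨.atom () [x, y] [] (by simp [hiar]) (by simp [har, hiar]), fun D a b => ?_⟩
  simp [LIF.sem, BRV.AgreeOn, funext_iff]

theorem relLR (har : voc.ar () = 2) (hiar : voc.iar () = 2) {u v : V} (huv : u ≠ v) (x y : V) :
    LifDef (dom := dom) voc (fun D a b => [a x, b y] ∈ D ()) := by
  classical
  refine ((eqLR x u).comp ((atomR har hiar u v).comp (eqLR v y))).congr fun D a b => ?_
  constructor
  · rintro ⟨c, h1, _, ⟨h2, rfl⟩, h3⟩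
    rwa [h1, ← h3]
  · intro h
    refine ⟨fun z => if z = u then a x else b y, by simp, _, ⟨?_, rfl⟩, ?_⟩ <;>
      simp [huv.symm, h]

theorem relRL (har : voc.ar () = 2) (hiar : voc.iar () = 2) {u v : V} (huv : u ≠ v) (x y : V) :
    LifDef (dom := dom) voc (fun D a b => [b x, a y] ∈ D ()) := by
  classical
  refine ((eqLR y v).comp ((atomR har hiar u v).comp (eqLR u x))).congr fun D a b => ?_
  constructor
  · rintro ⟨c, h1, _, ⟨h2, rfl⟩, h3⟩
    rwa [h1, ← h3]
  · intro h
    refine ⟨fun z => if z = u then b x else a y, by simp [huv.symm], _, ⟨?_, rfl⟩, ?_⟩ <;>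
      simp [huv.symm, h]

theorem relLL (har : voc.ar () = 2) (hiar : voc.iar () = 2) (x y : V) :
    LifDef (dom := dom) voc (fun D a _ => [a x, a y] ∈ D ()) := by
  refine ((atomR har hiar x y).comp all).congr fun D a b => ?_
  simp

theorem relRR (har : voc.ar () = 2) (hiar : voc.iar () = 2) (x y : V) :
    LifDef (dom := dom) voc (fun D _ b => [b x, b y] ∈ D ()) := by
  refine (all.comp (atomR har hiar x y)).congr fun D a b => ?_
  simp

theorem finsetAll {ι : Type*} (s : Finset ι)
    {P : ι → Interp Unit dom → (V → dom) → (V → dom) → Prop}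
    (hP : ∀ i, LifDef voc (P i)) : LifDef voc (fun D a b => ∀ i ∈ s, P i D a b) := by
  classical
  induction s using Finset.induction_on with
  | empty => exact all.congr (by simp)
  | insert i s _ ih => exact ((hP i).and ih).congr (by simp)

end LifDef

theorem isKClique_iff {V dom : Type*} [Fintype V] (R : Set (List dom)) (a b : V → dom) :
    IsKClique R (Set.range a ∪ Set.range b) (2 * Fintype.card V) ↔
      ∀ i j : V ⊕ V, i ≠ j → Sum.elim a b i ≠ Sum.elim a b j ∧
        [Sum.elim a b i, Sum.elim a b j] ∈ R := by
  rw [← Set.Sum.elim_range]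
  have hc : (Set.range (Sum.elim a b)).ncard = 2 * Fintype.card V ↔
      Function.Injective (Sum.elim a b) := by
    have h2 : 2 * Fintype.card V = (Set.univ : Set (V ⊕ V)).ncard := by
      rw [Set.ncard_univ, Nat.card_eq_fintype_card, Fintype.card_sum, two_mul]
    rw [h2, ← Set.image_univ, Set.ncard_image_iff, Set.injOn_univ]
  unfold IsKClique
  rw [hc]
  constructor
  · rintro ⟨h1, h2⟩ i j hij
    exact ⟨h1.ne hij, h2 _ ⟨i, rfl⟩ _ ⟨j, rfl⟩ (h1.ne hij)⟩
  · intro h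
    refine ⟨fun i j hij => by_contra fun hne => (h i j hne).1 hij, ?_⟩
    rintro _ ⟨i, rfl⟩ _ ⟨j, rfl⟩ hne
    exact (h i j fun e => hne (by rw [e])).2

theorem stmt18 (V dom : Type*) [Countable dom] [Infinite dom] [Fintype V]
    (n : ℕ) (hn : 2 ≤ n) (hV : Fintype.card V = n)
    (voc : Vocab Unit) (har : voc.ar () = 2) (hiar : voc.iar () = 2) :
    ∃ α : LIF Unit V voc, ∀ D : Interp Unit dom,
      α.sem D = {p | IsKClique (D ()) (Set.range p.1 ∪ Set.range p.2) (2 * n)} := by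
  classical
  subst hV
  obtain ⟨u, v, huv⟩ := Fintype.exists_pair_of_one_lt_card (α := V) (by omega)
  have key : ∀ i j : V ⊕ V, LifDef (dom := dom) voc (fun D a b =>
      i ≠ j → Sum.elim a b i ≠ Sum.elim a b j ∧
        [Sum.elim a b i, Sum.elim a b j] ∈ D ()) := by
    intro i j
    by_cases hij : i = j
    · exact LifDef.all.congr (by simp [hij])
    refine LifDef.congr (P := fun D a b => ¬ (Sum.elim a b i = Sum.elim a b j) ∧
        [Sum.elim a b i, Sum.elim a b j] ∈ D ()) ?_ (by simp [hij])
    rcases i with x | x <;> rcases j with y | y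
    · exact (LifDef.eqLL x y).not.and (LifDef.relLL har hiar x y)
    · exact (LifDef.eqLR x y).not.and (LifDef.relLR har hiar huv x y)
    · exact ((LifDef.eqLR y x).congr fun _ _ _ => eq_comm).not.and
        (LifDef.relRL har hiar huv x y)
    · exact (LifDef.eqRR x y).not.and (LifDef.relRR har hiar x y)
  obtain ⟨α, hα⟩ := LifDef.finsetAll (Finset.univ : Finset (V ⊕ V))
    fun i => LifDef.finsetAll (Finset.univ : Finset (V ⊕ V)) fun j => key i j
  refine ⟨α, fun D => ?_⟩
  ext ⟨a, b⟩
  rw [hα, Set.mem_setOf_eq, isKClique_iff]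
  simp only [Finset.mem_univ, forall_true_left]
end

section
/- Suppose the set of variables V = {x1,…,xn} is finite with n ≥ 2, and the module vocabulary consists of a single module name R with ar(R) = iar(R) = 2. If α_{2n} is a LIF expression such that for every interpretation D, ⟦α_{2n}⟧_D = {(ν1,ν2) : ν1(V) ∪ ν2(V) is a 2n-clique in D(R)} (where ν(V) denotes the image of V under ν), then for every interpretation D, ⟦(α_{2n} ; α_{2n}) ∩ α_{2n}⟧_D is nonempty if and only if D(R) contains a 3n-clique. -/
theorem aux_union_card {V dom : Type*} [Fintype V] (f g : V → dom)
    (h : (Set.range f ∪ Set.range g).ncard = 2 * Fintype.card V) :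
    (Set.range f).ncard = Fintype.card V ∧ (Set.range g).ncard = Fintype.card V ∧
      Disjoint (Set.range f) (Set.range g) := by
  have hle : ∀ k : V → dom, (Set.range k).ncard ≤ Fintype.card V := by
    intro k
    rw [← Set.image_univ]
    refine (Set.ncard_image_le Set.finite_univ).trans ?_
    rw [Set.ncard_univ, Nat.card_eq_fintype_card]
  have hf := hle f
  have hg := hle g
  have hu := Set.ncard_union_add_ncard_inter (Set.range f) (Set.range g)
    (Set.finite_range f) (Set.finite_range g)
  refine ⟨by omega, by omega, ?_⟩
  rw [Set.disjoint_iff_inter_eq_empty, ← Set.ncard_eq_zero ((Set.finite_range f).inter_of_left _)]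
  omega

theorem stmt19 (V dom : Type*) [Countable dom] [Infinite dom] [Fintype V]
    (n : ℕ) (hn : 2 ≤ n) (hV : Fintype.card V = n)
    (voc : Vocab Unit) (har : voc.ar () = 2) (hiar : voc.iar () = 2)
    (α : LIF Unit V voc)
    (hα : ∀ D : Interp Unit dom,
      α.sem D = {p | IsKClique (D ()) (Set.range p.1 ∪ Set.range p.2) (2 * n)}) :
    ∀ D : Interp Unit dom,
      ((LIF.inter (LIF.comp α α) α).sem D).Nonempty ↔
        ∃ L : Set dom, IsKClique (D ()) L (3 * n) := by
  intro D
  simp only [LIF.sem, hα, BRV.comp]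
  constructor
  · rintro ⟨⟨f, g⟩, ⟨h, ⟨c1, r1⟩, ⟨c2, r2⟩⟩, ⟨c3, r3⟩⟩
    simp only at c1 r1 c2 r2 c3 r3
    rw [← hV] at c1 c2 c3
    obtain ⟨nf, nh, d1⟩ := aux_union_card _ _ c1
    obtain ⟨-, ng, d2⟩ := aux_union_card _ _ c2
    obtain ⟨-, -, d3⟩ := aux_union_card _ _ c3
    refine ⟨(Set.range f ∪ Set.range h) ∪ Set.range g, ?_, ?_⟩
    · rw [Set.ncard_union_eq (Set.disjoint_union_left.2 ⟨d3, d2⟩)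
        ((Set.finite_range f).union (Set.finite_range h)) (Set.finite_range g), c1, ng, hV]
      omega
    · rintro a ((ha | ha) | ha) b ((hb | hb) | hb) hab
      · exact r1 a (Or.inl ha) b (Or.inl hb) hab
      · exact r1 a (Or.inl ha) b (Or.inr hb) hab
      · exact r3 a (Or.inl ha) b (Or.inr hb) hab
      · exact r1 a (Or.inr ha) b (Or.inl hb) hab
      · exact r1 a (Or.inr ha) b (Or.inr hb) hab
      · exact r2 a (Or.inl ha) b (Or.inr hb) hab
      · exact r3 a (Or.inr ha) b (Or.inl hb) hab
      · exact r2 a (Or.inr ha) b (Or.inl hb) hab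
      · exact r2 a (Or.inr ha) b (Or.inr hb) hab
  · rintro ⟨L, hc, hr⟩
    have hfin : L.Finite := Set.finite_of_ncard_pos (by omega)
    have := hfin.to_subtype
    have hcard : Nat.card (Fin 3 × V) = Nat.card L := by
      rw [Nat.card_coe_set_eq, hc, Nat.card_prod]
      simp [hV]
    let e : Fin 3 × V ≃ L := Classical.choice (Finite.card_eq.1 hcard)
    let ν : Fin 3 → V → dom := fun i v => (e (i, v) : dom)
    have hinj : ∀ i, Function.Injective (ν i) := by
      intro i v w hvw
      have := e.injective (Subtype.ext hvw)
      simpa using this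
    have key : ∀ i j : Fin 3, i ≠ j →
        IsKClique (D ()) (Set.range (ν i) ∪ Set.range (ν j)) (2 * n) := by
      intro i j hij
      have hsub : Set.range (ν i) ∪ Set.range (ν j) ⊆ L := by
        rintro _ (⟨v, rfl⟩ | ⟨v, rfl⟩) <;> exact Subtype.coe_prop _
      refine ⟨?_, fun a ha b hb hab => hr a (hsub ha) b (hsub hb) hab⟩
      have hd : Disjoint (Set.range (ν i)) (Set.range (ν j)) := by
        rw [Set.disjoint_left]
        rintro _ ⟨v, rfl⟩ ⟨w, hw⟩
        have := e.injective (Subtype.ext hw)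
        simp only [Prod.mk.injEq] at this
        exact hij this.1.symm
      have hr' : ∀ i, (Set.range (ν i)).ncard = n := by
        intro i
        rw [← Set.image_univ, Set.ncard_image_of_injective _ (hinj i), Set.ncard_univ,
          Nat.card_eq_fintype_card, hV]
      rw [Set.ncard_union_eq hd (Set.finite_range _) (Set.finite_range _), hr', hr']
      omega
    exact ⟨(ν 0, ν 2), ⟨ν 1, key 0 1 (by decide), key 1 2 (by decide)⟩, key 0 2 (by decide)⟩
end
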